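/- arXiv:1211.5640 — 2 statements merged into one kernel-verified Lean document; each statement's English description precedes it below -/
import Mathlib

section
/- Let F be a fullerene graph (so its cyclic edge-connectivity is 5) and let f, f′ be two disjoint faces of F with no edge joining them. Then f and f′ have at most one common neighboring face. -/
/-!
Suppose the disjoint faces `f`, `f'` have two common neighbours `g`, `h`, and pick one edge shared by
each consecutive pair of the cyclic sequence `f, g, f', h`.  Every face boundary contains an even
number of these four edges.  On the sphere such an edge set is a cut (`CubicMap.exists_cut`): counting
faces by size gives Euler's formula (`CubicMap.euler`), which forces the mod 2 cochain
complex to be exact at the edges, the graph and its dual both being connected.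

A cut `∇(X)` with `k ≤ 4` edges in a fullerene has a side with fewer than `k` vertices
(`CubicMap.cut_small`); this is cyclic 5-edge-connectivity.  For `k = 4` the handshake identity
makes that side a pair of adjacent vertices, one on `f` and one on `f'`, so an edge joins `f` to `f'`
(`CubicMap.common_neighbors`), contrary to assumption.

For `CubicMap.cut_small`, take the side `X` with at most six pentagons, and suppose it is a smallest
counterexample.  No vertex of `X` has two cut edges, as it could be moved across.  Let `L` be the
number of incidences between edges inside `X` and faces crossing the cut.  Euler's formula, together
with its inequality for the other side, gives `L ≤ 2k` because of the few pentagons, and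
`2L + 10 ≤ |X| + 3k` because no face is shorter than a pentagon (`CubicMap.ring_bounds`).  Removing
from `X` all vertices on crossing faces deletes at most `L` vertices and leaves a side `X'` with
`k' ≤ L - k ≤ k` cut edges.  By minimality `X'` is empty or has fewer than `k'` vertices, so `|X|` is
too small for the second bound (`CubicMap.small_side`).
-/

open SimpleGraph

/-- A graph is factor-critical if deleting any vertex leaves a graph with a perfect matching. -/
def FactorCritical {V : Type} (G : SimpleGraph V) : Prop :=
  ∀ v : V, ∃ M : G.Subgraph, M.IsMatching ∧ M.verts = {v}ᶜ

/-- The set of edges of `G` with exactly one endpoint in `X` (the edge cut `∇(X)`). -/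
def edgeCut {V : Type} (G : SimpleGraph V) (X : Set V) : Set (Sym2 V) :=
  {e | ∃ a b, G.Adj a b ∧ e = s(a,b) ∧ a ∈ X ∧ b ∉ X}

/-- The set of edges of `G` with one endpoint in `X` and the other in `Y`. -/
def edgesBetween {V : Type} (G : SimpleGraph V) (X Y : Set V) : Set (Sym2 V) :=
  {e | ∃ a b, G.Adj a b ∧ e = s(a,b) ∧ a ∈ X ∧ b ∈ Y}

/-- The set of edges of `G` with both endpoints in `X`. -/
def interiorEdges {V : Type} (G : SimpleGraph V) (X : Set V) : Set (Sym2 V) :=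
  {e | e ∈ G.edgeSet ∧ ∀ v ∈ e, v ∈ X}

/-- `C` is a cyclic edge-cut of `G`: after deleting `C` there are cycles in two
different components. -/
def IsCyclicEdgeCut {V : Type} (G : SimpleGraph V) (C : Set (Sym2 V)) : Prop :=
  C ⊆ G.edgeSet ∧ ∃ (u v : V) (p : (G.deleteEdges C).Walk u u) (q : (G.deleteEdges C).Walk v v),
    p.IsCycle ∧ q.IsCycle ∧ ¬ (G.deleteEdges C).Reachable u v

/-- `G` is cyclically `k`-edge-connected: every cyclic edge-cut has at least `k` edges. -/
def CyclicallyEdgeConnected {V : Type} (G : SimpleGraph V) (k : ℕ) : Prop :=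
  ∀ C : Set (Sym2 V), IsCyclicEdgeCut G C → k ≤ C.ncard

/-- A graph is 2-connected if it has at least 3 vertices and deleting any vertex
leaves it connected. -/
def TwoConnected {W : Type} (G : SimpleGraph W) : Prop :=
  3 ≤ Nat.card W ∧ ∀ v : W, ((⊤ : G.Subgraph).deleteVerts {v}).coe.Connected

/-- A combinatorial plane structure on a graph: an abstract set of faces, each face
being a cycle of the graph, with every edge lying on exactly two faces. -/
structure PlaneFaceStruct (V : Type) (G : SimpleGraph V) where
  Face : Type
  faceFinite : Finite Face
  boundary : Face → Set (Sym2 V)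
  boundary_sub : ∀ f, boundary f ⊆ G.edgeSet
  boundary_cycle : ∀ f : Face, ∃ (v : V) (w : G.Walk v v), w.IsCycle ∧
    ∀ e, e ∈ boundary f ↔ e ∈ w.edges
  edge_faces : ∀ e ∈ G.edgeSet, {f : Face | e ∈ boundary f}.ncard = 2

/-- A fullerene graph: a 3-connected cubic plane graph whose faces are pentagons and
hexagons, with exactly 12 pentagonal faces. -/
structure Fullerene (V : Type) [Fintype V] where
  G : SimpleGraph V
  threeConnected : ∀ S : Set V, S.ncard ≤ 2 → ((⊤ : G.Subgraph).deleteVerts S).coe.Connected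
  cubic : ∀ v : V, Nat.card {w // G.Adj v w} = 3
  faces : PlaneFaceStruct V G
  face_size : ∀ f, (faces.boundary f).ncard = 5 ∨ (faces.boundary f).ncard = 6
  pentagons : {f : faces.Face | (faces.boundary f).ncard = 5}.ncard = 12

/-- The vertices on the boundary of a face. -/
def Fullerene.faceVerts {V : Type} [Fintype V] (Fu : Fullerene V) (f : Fu.faces.Face) : Set V :=
  {v | ∃ e ∈ Fu.faces.boundary f, v ∈ e}

/-- `g` is a neighboring face of `f`: it is distinct from `f` and shares an edge with it. -/
def Fullerene.NeighboringFace {V : Type} [Fintype V] (Fu : Fullerene V)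
    (g f : Fu.faces.Face) : Prop :=
  g ≠ f ∧ (Fu.faces.boundary g ∩ Fu.faces.boundary f).Nonempty


namespace FullereneCut

open scoped Classical in
/-- Incidence data of a cubic map on the sphere with pentagonal and hexagonal faces.  Euler's formula
is not a field: it follows from the face sizes and the number of pentagons. -/
structure CubicMap (V E Φ : Type) [Fintype V] [Fintype E] [Fintype Φ] where
  /-- `inc v e`: the vertex `v` is an end of the edge `e`. -/
  inc : V → E → Prop
  /-- `bd f e`: the edge `e` lies on the boundary of the face `f`. -/
  bd : Φ → E → Prop
  two_ends : ∀ e, (Finset.univ.filter fun v => inc v e).card = 2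
  simple : ∀ e e', (∀ v, inc v e ↔ inc v e') → e = e'
  cubic : ∀ v, (Finset.univ.filter fun e => inc v e).card = 3
  two_faces : ∀ e, (Finset.univ.filter fun f => bd f e).card = 2
  /-- A face through a vertex uses exactly two of the edges there. -/
  cycle : ∀ f v e, bd f e → inc v e → (Finset.univ.filter fun e => inc v e ∧ bd f e).card = 2
  /-- A face boundary is connected: it cannot lie partly inside and partly outside `X` without using
  an edge from `X` to its complement. -/
  face_conn : ∀ f (X : Finset V),
    (∀ e, bd f e → (∀ v, inc v e → v ∈ X) ∨ (∀ v, inc v e → v ∉ X)) →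
    (∀ e, bd f e → ∀ v, inc v e → v ∈ X) ∨ (∀ e, bd f e → ∀ v, inc v e → v ∉ X)
  face_size : ∀ f, (Finset.univ.filter fun e => bd f e).card = 5 ∨
    (Finset.univ.filter fun e => bd f e).card = 6
  pentagons :
    (Finset.univ.filter fun f => (Finset.univ.filter fun e => bd f e).card = 5).card = 12
  /-- Deleting at most two vertices leaves a connected graph, phrased through the sides of a cut. -/
  three_conn : ∀ S X : Finset V, S.card ≤ 2 →
    (∀ e u v, inc u e → inc v e → u ∈ X → v ∉ X → u ∈ S ∨ v ∈ S) →
    (∀ v ∈ X, v ∈ S) ∨ (∀ v, v ∉ X → v ∈ S)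

/-! ### Cuts, faces and local structure -/

section
open scoped Classical
open Finset

/-- Double counting of the pairs related by `r`. -/
lemma dcount {α β : Type*} (s : Finset α) (t : Finset β) (r : α → β → Prop) :
    ∑ a ∈ s, (t.filter fun b => r a b).card = ∑ b ∈ t, (s.filter fun a => r a b).card :=
  Finset.sum_card_bipartiteAbove_eq_sum_card_bipartiteBelow r

namespace CubicMap

variable {V E Φ : Type} [Fintype V] [Fintype E] [Fintype Φ] (M : CubicMap V E Φ)

/-- The edges with both ends in `X`. -/
noncomputable def inner (X : Finset V) : Finset E :=
  univ.filter fun e => (X.filter fun v => M.inc v e).card = 2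

/-- The edges with exactly one end in `X`. -/
noncomputable def cut (X : Finset V) : Finset E :=
  univ.filter fun e => (X.filter fun v => M.inc v e).card = 1

/-- The vertex `v` lies on the face `f`. -/
def onF (f : Φ) (v : V) : Prop := ∃ e, M.bd f e ∧ M.inc v e

/-- The faces all of whose boundary edges have both ends in `X`. -/
noncomputable def inF (X : Finset V) : Finset Φ :=
  univ.filter fun f => ∀ e, M.bd f e → e ∈ M.inner X

/-- The faces whose boundary meets the cut of `X`. -/
noncomputable def crossF (X : Finset V) : Finset Φ :=
  univ.filter fun f => ∃ e, M.bd f e ∧ e ∈ M.cut X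

/-- The number of pentagonal faces inside `X`. -/
noncomputable def pent (X : Finset V) : ℕ :=
  ((M.inF X).filter fun f => (univ.filter fun e => M.bd f e).card = 5).card

lemma ends (e : E) : ∃ a b, a ≠ b ∧ ∀ v, M.inc v e ↔ v = a ∨ v = b := by
  obtain ⟨a, b, hab, h⟩ := Finset.card_eq_two.1 (M.two_ends e)
  refine ⟨a, b, hab, fun v => ?_⟩
  have : v ∈ (univ.filter fun v => M.inc v e) ↔ v ∈ ({a, b} : Finset V) := by rw [h]
  simpa using this

lemma card_ends_filter (X : Finset V) (e : E) {a b : V} (hab : a ≠ b)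
    (h : ∀ v, M.inc v e ↔ v = a ∨ v = b) :
    (X.filter fun v => M.inc v e).card = (if a ∈ X then 1 else 0) + (if b ∈ X then 1 else 0) := by
  have : (X.filter fun v => M.inc v e) = (({a, b} : Finset V).filter fun v => v ∈ X) := by
    ext v; simp [h]; tauto
  rw [this, Finset.filter_insert, Finset.filter_singleton]
  split_ifs <;> simp_all

lemma mem_inner {X : Finset V} {e : E} : e ∈ M.inner X ↔ ∀ v, M.inc v e → v ∈ X := by
  obtain ⟨a, b, hab, h⟩ := M.ends e
  simp only [inner, mem_filter, mem_univ, true_and, M.card_ends_filter X e hab h]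
  simp only [h]
  by_cases ha : a ∈ X <;> by_cases hb : b ∈ X <;> simp_all

lemma mem_cut {X : Finset V} {e : E} :
    e ∈ M.cut X ↔ (∃ u ∈ X, M.inc u e) ∧ (∃ v, v ∉ X ∧ M.inc v e) := by
  obtain ⟨a, b, hab, h⟩ := M.ends e
  simp only [cut, mem_filter, mem_univ, true_and, M.card_ends_filter X e hab h]
  simp only [h]
  by_cases ha : a ∈ X <;> by_cases hb : b ∈ X <;> simp [ha, hb] <;> grind

lemma cut_compl (X : Finset V) : M.cut Xᶜ = M.cut X := by
  ext e; simp only [mem_cut, mem_compl, not_not]; tauto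

lemma card_filter_eq (X : Finset V) (e : E) : (X.filter fun v => M.inc v e).card =
    2 * (if e ∈ M.inner X then 1 else 0) + (if e ∈ M.cut X then 1 else 0) := by
  obtain ⟨a, b, hab, h⟩ := M.ends e
  simp only [inner, cut, mem_filter, mem_univ, true_and, M.card_ends_filter X e hab h]
  by_cases ha : a ∈ X <;> by_cases hb : b ∈ X <;> simp_all

lemma trichotomy (X : Finset V) (e : E) : e ∈ M.inner X ∨ e ∈ M.cut X ∨ e ∈ M.inner Xᶜ := by
  simp only [mem_inner, mem_cut, mem_compl]
  by_contra! h
  obtain ⟨⟨v, hv, hvX⟩, h2, ⟨u, hu, huX⟩⟩ := h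
  exact h2 ⟨u, by tauto, hu⟩ v hvX hv

/-- Handshake lemma for the subgraph induced on `X`. -/
lemma handshake (X : Finset V) : 3 * X.card = 2 * (M.inner X).card + (M.cut X).card := by
  have h := dcount X univ M.inc
  simp only [M.cubic, M.card_filter_eq X, sum_add_distrib, ← mul_sum] at h
  simpa [mul_comm] using h

/-- Handshake lemma for the part of a face boundary that lies in `X`. -/
lemma face_handshake (X : Finset V) (f : Φ) : 2 * (X.filter fun v => M.onF f v).card =
    2 * ((M.inner X).filter fun e => M.bd f e).card +
      ((M.cut X).filter fun e => M.bd f e).card := by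
  have h := dcount X (univ.filter fun e => M.bd f e) M.inc
  have h1 : ∀ v, ((univ.filter fun e => M.bd f e).filter fun e => M.inc v e).card =
      2 * (if M.onF f v then 1 else 0) := by
    intro v
    rw [filter_filter]
    split_ifs with hv
    · obtain ⟨e, he, hev⟩ := hv
      rw [← M.cycle f v e he hev]; simp only [and_comm]; simp
    · rw [Finset.card_eq_zero.2, mul_zero]
      ext e; simp; intro h1 h2; exact hv ⟨e, h1, h2⟩
  simp only [h1, M.card_filter_eq X, sum_add_distrib, ← mul_sum] at h
  rw [← Finset.card_filter, ← Finset.card_filter, ← Finset.card_filter] at h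
  rw [h, filter_filter, filter_filter]
  have hi : ∀ S : Finset E, (univ.filter fun e => M.bd f e ∧ e ∈ S) =
      S.filter fun e => M.bd f e := by
    intro S; ext; simp [and_comm]
  rw [hi, hi]

/-- Every cut with both sides nonempty has at least three edges. -/
lemma three_le_cut (X : Finset V) (h1 : X.Nonempty) (h2 : Xᶜ.Nonempty) : 3 ≤ (M.cut X).card := by
  by_contra! hlt
  set S := X.filter fun v => ∃ e ∈ M.cut X, M.inc v e with hS
  have hSc : S.card ≤ (M.cut X).card := by
    have : S ⊆ (M.cut X).biUnion fun e => X.filter fun v => M.inc v e := by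
      intro v hv; simp [hS] at hv ⊢; tauto
    refine (card_le_card this).trans (card_biUnion_le.trans ?_)
    rw [sum_congr rfl (g := fun _ => 1)]
    · simp
    · intro e he; simpa [cut] using he
  rcases M.three_conn S X (by omega) (fun e u v hu hv huX hvX => Or.inl (by
      simp only [hS, mem_filter]
      exact ⟨huX, e, M.mem_cut.2 ⟨⟨u, huX, hu⟩, ⟨v, hvX, hv⟩⟩, hu⟩)) with h | h
  · have hc : X.card ≤ 2 := (card_le_card h).trans (by omega)
    have hh := M.handshake X
    have hpos := h1.card_pos
    have hm : 0 < (M.inner X).card := by omega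
    have hin : ∀ e ∈ M.inner X, (univ.filter fun v => M.inc v e) = X := by
      intro e he
      apply Finset.eq_of_subset_of_card_le
      · intro v hv; exact M.mem_inner.1 he v (by simpa using hv)
      · rw [M.two_ends]; exact hc
    obtain ⟨e, he⟩ := card_pos.1 hm
    have h2' : X.card = 2 := by rw [← hin e he, M.two_ends]
    have : (M.inner X).card ≤ 1 := Finset.card_le_one.2 fun e he e' he' => M.simple _ _ fun v => by
      have := (hin e he).trans (hin e' he').symm
      have := Finset.ext_iff.1 this v
      simpa using this
    omega
  · obtain ⟨v, hv⟩ := h2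
    have hv' := mem_compl.1 hv
    have := h v hv'
    simp [hS] at this
    tauto

/-- A set of vertices whose cut has at most five edges induces a connected subgraph. -/
lemma conn_of_cut (X Z : Finset V) (hX : Xᶜ.Nonempty) (hk : (M.cut X).card ≤ 5) (hZ : Z ⊆ X)
    (hz : ∀ e ∈ M.inner X, e ∉ M.cut Z) : Z = ∅ ∨ Z = X := by
  by_contra! h
  obtain ⟨hne, hne'⟩ := h
  have hW : (X \ Z).Nonempty := by
    rw [Finset.sdiff_nonempty]; exact fun h => hne' (hZ.antisymm h)
  have hsub : ∀ W ⊆ X, Wᶜ.Nonempty := by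
    intro W hW
    exact hX.mono (compl_subset_compl.2 hW)
  have a := M.three_le_cut Z hne (hsub _ hZ)
  have b := M.three_le_cut (X \ Z) hW (hsub _ sdiff_subset)
  have hdis : Disjoint (M.cut Z) (M.cut (X \ Z)) := by
    rw [Finset.disjoint_left]
    intro e he he'
    have hc := hz e
    obtain ⟨a, b, hab, hh⟩ := M.ends e
    simp only [mem_inner, mem_cut, hh, mem_sdiff] at he he' hc
    have hZa := @hZ a
    have hZb := @hZ b
    grind
  have hun : M.cut Z ∪ M.cut (X \ Z) ⊆ M.cut X := by
    intro e he
    have hc := hz e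
    obtain ⟨a, b, hab, hh⟩ := M.ends e
    simp only [mem_inner, mem_cut, hh, mem_sdiff, mem_union] at he hc ⊢
    have hZa := @hZ a
    have hZb := @hZ b
    grind
  have := card_le_card hun
  rw [card_union_of_disjoint hdis] at this
  omega

lemma face_nonempty (f : Φ) : ∃ e, M.bd f e := by
  have : 0 < (univ.filter fun e => M.bd f e).card := by rcases M.face_size f with h | h <;> omega
  obtain ⟨e, he⟩ := card_pos.1 this
  exact ⟨e, by simpa using he⟩

lemma inc_exists (e : E) : ∃ v, M.inc v e := by
  obtain ⟨a, b, _, h⟩ := M.ends e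
  exact ⟨a, (h a).2 (Or.inl rfl)⟩

/-- Two edges at a vertex lie on a common face. -/
lemma common_face {v : V} {e e' : E} (he : M.inc v e) (he' : M.inc v e') :
    ∃ f, M.bd f e ∧ M.bd f e' := by
  by_cases hne : e = e'
  · subst hne
    have : 0 < (univ.filter fun f => M.bd f e).card := by rw [M.two_faces]; omega
    obtain ⟨f, hf⟩ := card_pos.1 this
    exact ⟨f, by simpa using hf, by simpa using hf⟩
  by_contra! hno
  -- Otherwise the two faces at `e` and the two at `e'` are four different faces, and each of them
  -- also uses the third edge at `v`, which lies on two faces only.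
  set T := univ.filter fun d => M.inc v d with hT
  have hTc : T.card = 3 := M.cubic v
  have key : ∀ f, (T.filter fun d => M.bd f d).card = 0 ∨
      (T.filter fun d => M.bd f d).card = 2 := by
    intro f
    by_cases hf : ∃ d, M.bd f d ∧ M.inc v d
    · obtain ⟨d, hd, hd'⟩ := hf
      right; rw [hT, filter_filter]; exact M.cycle f v d hd hd'
    · left; rw [card_eq_zero, filter_eq_empty_iff]
      intro d hd hd'; exact hf ⟨d, hd', by simpa [hT] using hd⟩
  obtain ⟨d, hd⟩ : ∃ d, T = {e, e', d} := by
    have hsub : ({e, e'} : Finset E) ⊆ T := by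
      intro x hx; simp at hx; rcases hx with rfl | rfl <;> simp [hT, he, he']
    have hc : (T \ {e, e'}).card = 1 := by
      rw [card_sdiff_of_subset hsub, hTc, card_pair hne]
    obtain ⟨d, hd⟩ := card_eq_one.1 hc
    refine ⟨d, ?_⟩
    rw [← union_sdiff_of_subset hsub, hd]; ext; simp
  have hne2 : e ≠ d ∧ e' ≠ d := by
    constructor <;> rintro rfl <;> rw [hd] at hTc
    · have := card_le_two (a := e') (b := e)
      simp at hTc; omega
    · simp [hne] at hTc
  have hF : ∀ f, M.bd f e ∨ M.bd f e' → M.bd f d := by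
    intro f hf
    by_contra hfd
    have := key f
    rw [hd] at this
    have hno' := hno f
    simp only [filter_insert, filter_singleton, hfd, if_false] at this
    by_cases h1 : M.bd f e <;> by_cases h2 : M.bd f e' <;> simp_all
  have h4 : (univ.filter fun f => M.bd f e) ∪ (univ.filter fun f => M.bd f e') ⊆
      univ.filter fun f => M.bd f d := by
    intro f hf; simp at hf ⊢; exact hF f hf
  have := card_le_card h4
  rw [card_union_of_disjoint, M.two_faces, M.two_faces, M.two_faces] at this
  · omega
  · rw [Finset.disjoint_left]; intro f hf hf'; simp at hf hf'; exact hno f hf hf'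

/-- Two faces through `v` each use two of the three edges at `v`, so they share one. -/
lemma share_edge {v : V} {f g : Φ} (hf : M.onF f v) (hg : M.onF g v) :
    ∃ e, M.bd f e ∧ M.bd g e ∧ M.inc v e := by
  obtain ⟨e, he, hve⟩ := hf
  obtain ⟨e', he', hve'⟩ := hg
  have h1 := M.cycle f v e he hve
  have h2 := M.cycle g v e' he' hve'
  have h3 : ((univ.filter fun e => M.inc v e ∧ M.bd f e) ∪
      (univ.filter fun e => M.inc v e ∧ M.bd g e)).card ≤ 3 := by
    rw [← M.cubic v]; apply card_le_card; intro d hd; simp at hd ⊢; tauto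
  have h4 := card_union_add_card_inter (univ.filter fun e => M.inc v e ∧ M.bd f e)
      (univ.filter fun e => M.inc v e ∧ M.bd g e)
  obtain ⟨d, hd⟩ := card_pos.1 (show 0 < ((univ.filter fun e => M.inc v e ∧ M.bd f e) ∩
      (univ.filter fun e => M.inc v e ∧ M.bd g e)).card by omega)
  simp at hd
  exact ⟨d, by tauto⟩

/-- The dual graph is connected: a function on faces that agrees across every edge is constant. -/
lemma dual_conn {R : Type*} (c : Φ → R) (hc : ∀ e f g, M.bd f e → M.bd g e → c f = c g) (f g : Φ) :
    c f = c g := by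
  have hv : ∀ v f g, M.onF f v → M.onF g v → c f = c g := by
    intro v f g hf hg
    obtain ⟨e, h1, h2, _⟩ := M.share_edge hf hg
    exact hc e f g h1 h2
  obtain ⟨e, he⟩ := M.face_nonempty f
  obtain ⟨v, hve⟩ := M.inc_exists e
  obtain ⟨e', he'⟩ := M.face_nonempty g
  obtain ⟨v', hve'⟩ := M.inc_exists e'
  set X := univ.filter fun u => ∃ h, M.onF h u ∧ c h = c f with hX
  have hcut : M.cut X = ∅ := by
    rw [eq_empty_iff_forall_notMem]
    intro d hd
    obtain ⟨⟨u, hu, hud⟩, ⟨w, hw, hwd⟩⟩ := M.mem_cut.1 hd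
    obtain ⟨h, hh, -⟩ := M.common_face hud hud
    simp only [hX, mem_filter, mem_univ, true_and] at hu hw
    obtain ⟨h', hh', hc'⟩ := hu
    exact hw ⟨h, ⟨d, hh, hwd⟩, (hv u h h' ⟨d, hh, hud⟩ hh').trans hc'⟩
  have hne : X.Nonempty := ⟨v, by simp only [hX, mem_filter, mem_univ, true_and]
                                  exact ⟨f, ⟨e, he, hve⟩, rfl⟩⟩
  have hv' : v' ∈ X := by
    by_contra h
    have := M.three_le_cut X hne ⟨v', by simpa using h⟩
    simp [hcut] at this
  simp only [hX, mem_filter, mem_univ, true_and] at hv'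
  obtain ⟨h, hh, hhc⟩ := hv'
  rw [← hhc]
  exact (hv v' h g hh ⟨e', he', hve'⟩)


end CubicMap

/-! ### Mod 2 homology -/

open Module in
lemma finrank_ker_le_one {m n : Type} [Fintype m] [Fintype n] (A : Matrix m n (ZMod 2))
    (h : ∀ y, A.mulVec y = 0 → ∃ a, y = fun _ => a) :
    Fintype.card n ≤ A.rank + 1 := by
  have h1 := LinearMap.finrank_range_add_finrank_ker A.mulVecLin
  rw [Module.finrank_pi] at h1
  have h2 : finrank (ZMod 2) (LinearMap.ker A.mulVecLin) ≤ 1 := by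
    have hle : LinearMap.ker A.mulVecLin ≤ Submodule.span (ZMod 2) {(fun _ => 1 : n → ZMod 2)} := by
      intro y hy
      obtain ⟨a, rfl⟩ := h y (by simpa using hy)
      exact Submodule.mem_span_singleton.2 ⟨a, by ext; simp⟩
    exact (Submodule.finrank_mono hle).trans (by
      have := finrank_span_le_card (R := ZMod 2) ({(fun _ => 1)} : Set (n → ZMod 2))
      simpa using this)
  unfold Matrix.rank
  omega

open Module in
lemma finrank_ker_zero {m n : Type} [Fintype m] [Fintype n] (A : Matrix m n (ZMod 2))
    (h : ∀ y, A.mulVec y = 0 → y = 0) :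
    Fintype.card n ≤ A.rank := by
  have h1 := LinearMap.finrank_range_add_finrank_ker A.mulVecLin
  rw [Module.finrank_pi] at h1
  have h2 : LinearMap.ker A.mulVecLin = ⊥ := by
    rw [LinearMap.ker_eq_bot']
    intro y hy; exact h y hy
  rw [h2, finrank_bot] at h1
  unfold Matrix.rank
  omega

/-- If `B * D = 0`, the rows of `B` are independent, and the kernel of `D` contains only constants,
then `|P| + |N| ≤ |M| + 1`. -/
lemma rank_ineq {P M N : Type} [Fintype P] [Fintype M] [Fintype N]
    (B : Matrix P M (ZMod 2)) (D : Matrix M N (ZMod 2)) (h0 : B * D = 0)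
    (hB : ∀ c, B.transpose.mulVec c = 0 → c = 0)
    (hD : ∀ y, D.mulVec y = 0 → ∃ a, y = fun _ => a) :
    Fintype.card P + Fintype.card N ≤ Fintype.card M + 1 := by
  have h1 := Matrix.rank_add_rank_le_card_of_mul_eq_zero h0
  have h2 := finrank_ker_zero _ hB
  have h3 := finrank_ker_le_one _ hD
  rw [Matrix.rank_transpose] at h2
  omega

open Module in
/-- If `B * D = 0`, the kernels of `Bᵀ` and of `D` contain only constants, and
`|P| + |N| = |M| + 2`, then the kernel of `B` is the range of `D`. -/
lemma rank_exact {P M N : Type} [Fintype P] [Fintype M] [Fintype N]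
    (B : Matrix P M (ZMod 2)) (D : Matrix M N (ZMod 2)) (h0 : B * D = 0)
    (hB : ∀ c, B.transpose.mulVec c = 0 → ∃ a, c = fun _ => a)
    (hD : ∀ y, D.mulVec y = 0 → ∃ a, y = fun _ => a)
    (hc : Fintype.card P + Fintype.card N = Fintype.card M + 2) (x : M → ZMod 2)
    (hx : B.mulVec x = 0) : ∃ y, D.mulVec y = x := by
  have h2 := finrank_ker_le_one _ hB
  have h3 := finrank_ker_le_one _ hD
  rw [Matrix.rank_transpose] at h2
  have h1 := LinearMap.finrank_range_add_finrank_ker B.mulVecLin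
  rw [Module.finrank_pi] at h1
  have hle : LinearMap.range D.mulVecLin ≤ LinearMap.ker B.mulVecLin := by
    rintro _ ⟨y, rfl⟩
    simp [Matrix.mulVec_mulVec, h0]
  have heq := Submodule.eq_of_le_of_finrank_le hle (by
    unfold Matrix.rank at h2 h3; omega)
  have : x ∈ LinearMap.range D.mulVecLin := by rw [heq]; simpa using hx
  obtain ⟨y, hy⟩ := this
  exact ⟨y, by simpa using hy⟩

namespace CubicMap

variable {V E Φ : Type} [Fintype V] [Fintype E] [Fintype Φ] (M : CubicMap V E Φ)

/-- A face uses an even number of edges at each vertex: the composite of the boundary maps from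
faces to edges to vertices vanishes. -/
lemma card_even (f : Φ) (v : V) :
    (((univ.filter fun e => M.inc v e ∧ M.bd f e).card : ℕ) : ZMod 2) = 0 := by
  by_cases h : M.onF f v
  · obtain ⟨e, he, hv⟩ := h
    rw [M.cycle f v e he hv]; rfl
  · rw [card_eq_zero.2]; · simp
    rw [filter_eq_empty_iff]; intro e _ he; exact h ⟨e, he.2, he.1⟩

/-- The sum of a `ZMod 2`-valued function over the ends of an edge vanishes iff the two values
agree. -/
lemma sum_ends (y : V → ZMod 2) (e : E) {a b : V} (hab : a ≠ b)
    (h : ∀ v, M.inc v e ↔ v = a ∨ v = b) :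
    ∑ v, (if M.inc v e then 1 else 0) * y v = y a + y b := by
  have : ∀ v, (if M.inc v e then (1 : ZMod 2) else 0) * y v = if v ∈ ({a, b} : Finset V) then y v
      else 0 := by
    intro v; simp [h]
  simp_rw [this]
  rw [Finset.sum_ite_mem, univ_inter, sum_pair hab]

lemma faces_of_edge (e : E) : ∃ f g, f ≠ g ∧ ∀ h, M.bd h e ↔ h = f ∨ h = g := by
  obtain ⟨a, b, hab, h⟩ := Finset.card_eq_two.1 (M.two_faces e)
  refine ⟨a, b, hab, fun v => ?_⟩
  have : v ∈ (univ.filter fun v => M.bd v e) ↔ v ∈ ({a, b} : Finset Φ) := by rw [h]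
  simpa using this

lemma sum_faces (c : Φ → ZMod 2) (e : E) {f g : Φ} (hfg : f ≠ g)
    (h : ∀ v, M.bd v e ↔ v = f ∨ v = g) :
    ∑ v, (if M.bd v e then 1 else 0) * c v = c f + c g := by
  have : ∀ v, (if M.bd v e then (1 : ZMod 2) else 0) * c v = if v ∈ ({f, g} : Finset Φ) then c v
      else 0 := by
    intro v; simp [h]
  simp_rw [this]
  rw [Finset.sum_ite_mem, univ_inter, sum_pair hfg]

lemma zmod2_eq {a b : ZMod 2} (h : a + b = 0) : a = b := by
  revert a b; decide

/-- Over `ZMod 2`, a linear relation among face boundaries has all coefficients equal. -/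
lemma faces_relation (c : Φ → ZMod 2) (h : ∀ e, ∑ f, (if M.bd f e then 1 else 0) * c f = 0)
    (f g : Φ) : c f = c g := by
  refine M.dual_conn c (fun e f g hf hg => ?_) f g
  obtain ⟨p, q, hpq, hh⟩ := M.faces_of_edge e
  have := h e
  rw [M.sum_faces c e hpq hh] at this
  have := zmod2_eq this
  rcases (hh f).1 hf with rfl | rfl <;> rcases (hh g).1 hg with rfl | rfl <;> simp_all

/-- Planarity of one side of a small cut: the faces inside `Y` have independent boundaries in the
cycle space of the connected graph induced on `Y`. -/
lemma euler_le (Y : Finset V) (hY : Yᶜ.Nonempty) (hk : (M.cut Y).card ≤ 5)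
    (hne : (M.cut Y).Nonempty) :
    (M.inF Y).card + Y.card ≤ (M.inner Y).card + 1 := by
  have key := rank_ineq (P := {f // f ∈ M.inF Y}) (M := {e // e ∈ M.inner Y}) (N := {v // v ∈ Y})
    (Matrix.of fun f e => if M.bd f.1 e.1 then 1 else 0)
    (Matrix.of fun e v => if M.inc v.1 e.1 then 1 else 0) ?_ ?_ ?_
  · simpa using key
  · ext f v
    rw [Matrix.mul_apply]
    simp only [Matrix.of_apply, Matrix.zero_apply]
    refine Eq.trans ?_ (M.card_even f.1 v.1)
    have hf := (mem_filter.1 f.2).2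
    rw [Finset.card_filter, Nat.cast_sum]
    rw [← Finset.sum_subset (subset_univ (M.inner Y)), ← Finset.sum_coe_sort (M.inner Y)]
    · refine sum_congr rfl fun e _ => ?_
      by_cases h1 : M.bd f.1 e.1 <;> by_cases h2 : M.inc v.1 e.1 <;> simp [h1, h2]
    · intro e _ he
      rw [if_neg]; · simp
      exact fun h => he (hf e h.2)
  · intro c hc
    set c' : Φ → ZMod 2 := fun f => if h : f ∈ M.inF Y then c ⟨f, h⟩ else 0 with hc'
    have hrel : ∀ e, ∑ f, (if M.bd f e then 1 else 0) * c' f = 0 := by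
      intro e
      rw [← Finset.sum_subset (subset_univ (M.inF Y))]
      · rw [← Finset.sum_coe_sort (M.inF Y)]
        by_cases he : e ∈ M.inner Y
        · have := congrFun hc ⟨e, he⟩
          simp only [Matrix.mulVec, dotProduct, Matrix.transpose_apply, Matrix.of_apply,
            Pi.zero_apply] at this
          refine Eq.trans ?_ this
          refine sum_congr rfl fun f _ => ?_
          simp [hc']
        · refine sum_eq_zero fun f _ => ?_
          rw [if_neg, zero_mul]
          exact fun h => he ((mem_filter.1 f.2).2 e h)
      · intro f _ hf; simp [hc', hf]
    obtain ⟨e, he⟩ := hne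
    obtain ⟨p, q, hpq, hh⟩ := M.faces_of_edge e
    have hp : p ∉ M.inF Y := by
      intro h
      have h1 := (mem_filter.1 h).2 e ((hh p).2 (Or.inl rfl))
      simp only [inner, cut, mem_filter] at h1 he
      omega
    ext f
    have := M.faces_relation c' hrel f.1 p
    simpa [hc', hp] using this
  · intro y hy
    set Z := Y.filter fun v => ∃ h : v ∈ Y, y ⟨v, h⟩ = 1 with hZ
    have hz := M.conn_of_cut Y Z hY hk (filter_subset _ _) (by
      intro e he hez
      obtain ⟨a, b, hab, hh⟩ := M.ends e
      have hm := M.mem_inner.1 he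
      have haY := hm a ((hh a).2 (Or.inl rfl))
      have hbY := hm b ((hh b).2 (Or.inr rfl))
      have := congrFun hy ⟨e, he⟩
      simp only [Matrix.mulVec, dotProduct, Matrix.of_apply, Pi.zero_apply] at this
      have h2 := M.sum_ends (fun v => if h : v ∈ Y then y ⟨v, h⟩ else 0) e hab hh
      rw [← Finset.sum_subset (subset_univ Y) (by intro v _ hv; simp [hv]),
        ← Finset.sum_coe_sort Y] at h2
      simp only [dif_pos, haY, hbY, Subtype.coe_eta] at h2
      have h3 := zmod2_eq (h2.symm.trans (Eq.trans (sum_congr rfl fun v _ => by simp) this))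
      obtain ⟨⟨u, hu, hui⟩, ⟨w, hw, hwi⟩⟩ := M.mem_cut.1 hez
      rw [hh] at hui hwi
      simp only [hZ, mem_filter] at hu hw
      rcases hui with rfl | rfl <;> rcases hwi with rfl | rfl <;> simp_all)
    rcases hz with hz | hz
    · refine ⟨0, funext fun v => ?_⟩
      have : v.1 ∉ Z := by simp [hz]
      simp only [hZ, mem_filter, v.2, true_and, exists_true_left] at this
      generalize y v = t at this
      revert t; decide
    · refine ⟨1, funext fun v => ?_⟩
      have : v.1 ∈ Z := by simp [hz]
      simp only [hZ, mem_filter, v.2, true_and, exists_true_left] at this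
      exact this

/-- Euler's formula for the sphere. -/
lemma euler (M : CubicMap V E Φ) : Fintype.card Φ + Fintype.card V = Fintype.card E + 2 := by
  have h1 := dcount (univ : Finset V) (univ : Finset E) M.inc
  have h2 := dcount (univ : Finset Φ) (univ : Finset E) M.bd
  simp only [M.cubic, M.two_ends, M.two_faces, sum_const, card_univ, smul_eq_mul] at h1 h2
  have h3 : ∑ f : Φ, ((univ.filter fun e => M.bd f e).card +
      (if (univ.filter fun e => M.bd f e).card = 5 then 1 else 0)) = ∑ f : Φ, 6 := by
    refine sum_congr rfl fun f _ => ?_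
    rcases M.face_size f with h | h <;> simp [h]
  rw [sum_add_distrib, ← card_filter, M.pentagons, h2] at h3
  simp at h3
  omega

/-- The graph is connected: a function with zero coboundary is constant. -/
lemma inc_const (y : V → ZMod 2) (h : ∀ e, ∑ v, (if M.inc v e then 1 else 0) * y v = 0) :
    ∃ a, y = fun _ => a := by
  set Z := univ.filter fun v => y v = 1 with hZ
  have hc : M.cut Z = ∅ := by
    rw [eq_empty_iff_forall_notMem]
    intro e he
    obtain ⟨a, b, hab, hh⟩ := M.ends e
    have := h e
    rw [M.sum_ends y e hab hh] at this
    have h3 := zmod2_eq this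
    obtain ⟨⟨u, hu, hui⟩, ⟨w, hw, hwi⟩⟩ := M.mem_cut.1 he
    rw [hh] at hui hwi
    simp only [hZ, mem_filter] at hu hw
    rcases hui with rfl | rfl <;> rcases hwi with rfl | rfl <;> simp_all
  by_cases h1 : Z.Nonempty
  · by_cases h2 : Zᶜ.Nonempty
    · have := M.three_le_cut Z h1 h2
      simp [hc] at this
    · refine ⟨1, funext fun v => ?_⟩
      by_contra hv
      exact h2 ⟨v, by simp [hZ, hv]⟩
  · refine ⟨0, funext fun v => ?_⟩
    by_contra hv
    have : y v = 1 := by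
      generalize y v = t at hv
      revert t; decide
    exact h1 ⟨v, by simp [hZ, this]⟩

/-- On the sphere every closed curve separates: a set of edges meeting every face boundary an even
number of times is a cut. -/
lemma exists_cut (C : Finset E) (hC : ∀ f, Even (C.filter fun e => M.bd f e).card) :
    ∃ X, M.cut X = C := by
  obtain ⟨y, hy⟩ := rank_exact (P := Φ) (M := E) (N := V)
    (Matrix.of fun f e => if M.bd f e then 1 else 0)
    (Matrix.of fun e v => if M.inc v e then 1 else 0) (by
      ext f v
      rw [Matrix.mul_apply]
      simp only [Matrix.of_apply, Matrix.zero_apply]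
      refine Eq.trans ?_ (M.card_even f v)
      rw [Finset.card_filter, Nat.cast_sum]
      refine sum_congr rfl fun e _ => ?_
      by_cases h1 : M.bd f e <;> by_cases h2 : M.inc v e <;> simp [h1, h2])
    (fun c hc => by
      rcases isEmpty_or_nonempty Φ with h | ⟨⟨f⟩⟩
      · exact ⟨0, funext fun f => h.elim f⟩
      · refine ⟨c f, funext fun g => M.faces_relation c (fun e => ?_) g f⟩
        simpa [Matrix.mulVec, dotProduct, Matrix.transpose_apply] using congrFun hc e)
    (fun y hy => M.inc_const y fun e => by
      simpa [Matrix.mulVec, dotProduct] using congrFun hy e)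
    M.euler (fun e => if e ∈ C then 1 else 0) (by
      ext f
      have := (ZMod.natCast_eq_zero_iff_even).2 (hC f)
      rw [Pi.zero_apply]
      refine Eq.trans ?_ this
      simp only [Matrix.mulVec, dotProduct, Matrix.of_apply]
      rw [Finset.card_filter, Nat.cast_sum, ← Finset.sum_subset (subset_univ C)]
      · exact sum_congr rfl fun e he => by simp [he]
      · intro e _ he; simp [he])
  refine ⟨univ.filter fun v => y v = 1, ?_⟩
  ext e
  obtain ⟨a, b, hab, hh⟩ := M.ends e
  have h1 := M.sum_ends y e hab hh
  have h2 := congrFun hy e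
  simp only [Matrix.mulVec, dotProduct, Matrix.of_apply] at h2
  rw [h2] at h1
  simp only [cut, mem_filter, mem_univ, true_and]
  rw [M.card_ends_filter _ e hab hh]
  simp only [mem_filter, mem_univ, true_and]
  by_cases he : e ∈ C <;> simp only [he, if_true, if_false] at h1 ⊢ <;>
    generalize y a = s at * <;> generalize y b = t at * <;> clear hy h2 <;> revert s t <;> decide

end CubicMap

/-! ### Peeling off the ring along a small cut -/

namespace CubicMap

variable {V E Φ : Type} [Fintype V] [Fintype E] [Fintype Φ] (M : CubicMap V E Φ)

/-- The number of crossing faces of `X` through the vertex `v`. -/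
noncomputable def cross (X : Finset V) (v : V) : ℕ := ((M.crossF X).filter fun f => M.onF f v).card

/-- The length of the boundary ring of `X` on the side of `X`: the number of incidences between
crossing faces and inner edges. -/
noncomputable def ringLen (X : Finset V) : ℕ :=
  ∑ f ∈ M.crossF X, ((M.inner X).filter fun e => M.bd f e).card

/-- The number of cut edges of `X` at the vertex `v`. -/
noncomputable def cutDeg (X : Finset V) (v : V) : ℕ := ((M.cut X).filter fun e => M.inc v e).card

lemma mem_inF {X : Finset V} {f : Φ} : f ∈ M.inF X ↔ ∀ e, M.bd f e → e ∈ M.inner X := by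
  simp [inF]

lemma mem_crossF {X : Finset V} {f : Φ} : f ∈ M.crossF X ↔ ∃ e, M.bd f e ∧ e ∈ M.cut X := by
  simp [crossF]

lemma crossF_compl (X : Finset V) : M.crossF Xᶜ = M.crossF X := by
  ext f; simp [mem_crossF, cut_compl]

lemma not_inner_cut {X : Finset V} {e : E} (h : e ∈ M.inner X) : e ∉ M.cut X := by
  simp only [inner, cut, mem_filter] at *; omega

lemma not_inner_compl {X : Finset V} {e : E} (h : e ∈ M.inner X) : e ∉ M.inner Xᶜ := by
  obtain ⟨v, hv⟩ := M.inc_exists e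
  intro h'
  exact (mem_compl.1 (M.mem_inner.1 h' v hv)) (M.mem_inner.1 h v hv)

/-- A face lies inside `X`, or outside `X`, or crosses the cut. -/
lemma face_trichotomy (X : Finset V) (f : Φ) :
    f ∈ M.inF X ∨ f ∈ M.crossF X ∨ f ∈ M.inF Xᶜ := by
  by_cases hc : f ∈ M.crossF X
  · tauto
  rw [mem_crossF] at hc
  push Not at hc
  rcases M.face_conn f X (fun e he => by
    rcases M.trichotomy X e with h | h | h
    · exact Or.inl (M.mem_inner.1 h)
    · exact absurd h (hc e he)
    · exact Or.inr fun v hv => mem_compl.1 (M.mem_inner.1 h v hv)) with h | h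
  · exact Or.inl (M.mem_inF.2 fun e he => M.mem_inner.2 (h e he))
  · exact Or.inr (Or.inr (M.mem_inF.2 fun e he => M.mem_inner.2 fun v hv =>
      mem_compl.2 (h e he v hv)))

lemma inF_disj_cross (X : Finset V) : Disjoint (M.inF X) (M.crossF X) := by
  rw [Finset.disjoint_left]
  intro f h1 h2
  obtain ⟨e, he, hc⟩ := M.mem_crossF.1 h2
  exact M.not_inner_cut (M.mem_inF.1 h1 e he) hc

lemma inF_disj_compl (X : Finset V) : Disjoint (M.inF X) (M.inF Xᶜ) := by
  rw [Finset.disjoint_left]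
  intro f h1 h2
  obtain ⟨e, he⟩ := M.face_nonempty f
  exact M.not_inner_compl (M.mem_inF.1 h1 e he) (M.mem_inF.1 h2 e he)

lemma face_count (X : Finset V) : Fintype.card Φ =
    (M.inF X).card + (M.crossF X).card + (M.inF Xᶜ).card := by
  have h2 : Disjoint (M.inF X ∪ M.crossF X) (M.inF Xᶜ) := by
    rw [disjoint_union_left]
    refine ⟨M.inF_disj_compl X, ?_⟩
    have := M.inF_disj_cross Xᶜ
    rw [crossF_compl] at this
    exact this.symm
  rw [← card_union_of_disjoint (M.inF_disj_cross X), ← card_union_of_disjoint h2, ← card_univ]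
  congr 1
  ext f
  have := M.face_trichotomy X f
  simp only [mem_union, mem_univ, true_iff]; tauto

lemma edge_count (X : Finset V) : Fintype.card E =
    (M.inner X).card + (M.cut X).card + (M.inner Xᶜ).card := by
  have h1 : Disjoint (M.inner X) (M.cut X) := Finset.disjoint_left.2 fun e h => M.not_inner_cut h
  have h2 : Disjoint (M.inner X ∪ M.cut X) (M.inner Xᶜ) := by
    rw [disjoint_union_left]
    refine ⟨Finset.disjoint_left.2 fun e h => M.not_inner_compl h, Finset.disjoint_left.2 fun e h h' => ?_⟩
    have := M.not_inner_cut h'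
    rw [cut_compl] at this
    exact this h
  rw [← card_union_of_disjoint h1, ← card_union_of_disjoint h2, ← card_univ]
  congr 1
  ext f
  have := M.trichotomy X f
  simp only [mem_union, mem_univ, true_iff]; tauto

/-- Summing over the crossing faces, each cut edge is counted on its two faces. -/
lemma sum_cross_cut (X : Finset V) :
    ∑ f ∈ M.crossF X, ((M.cut X).filter fun e => M.bd f e).card = 2 * (M.cut X).card := by
  have h := dcount (univ : Finset Φ) (M.cut X) M.bd
  rw [sum_congr rfl fun e _ => M.two_faces e, sum_const, smul_eq_mul, mul_comm] at h
  rw [← h]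
  refine sum_subset (subset_univ _) fun f _ hf => ?_
  rw [card_eq_zero, filter_eq_empty_iff]
  intro e he hb
  exact hf (M.mem_crossF.2 ⟨e, hb, he⟩)

/-- Each crossing face meets the cut an even, positive number of times. -/
lemma crossF_card_le (X : Finset V) : (M.crossF X).card ≤ (M.cut X).card := by
  have h : ∑ f ∈ M.crossF X, 2 ≤ ∑ f ∈ M.crossF X, ((M.cut X).filter fun e => M.bd f e).card := by
    refine sum_le_sum fun f hf => ?_
    have h1 := M.face_handshake X f
    obtain ⟨e, he, hc⟩ := M.mem_crossF.1 hf
    have : 0 < ((M.cut X).filter fun e => M.bd f e).card := card_pos.2 ⟨e, by simp [he, hc]⟩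
    omega
  rw [M.sum_cross_cut, sum_const, smul_eq_mul] at h
  omega

lemma sum_cross (X : Finset V) : ∑ v ∈ X, M.cross X v = M.ringLen X + (M.cut X).card := by
  have h1 : ∑ v ∈ X, M.cross X v = ∑ f ∈ M.crossF X, (X.filter fun v => M.onF f v).card :=
    dcount X (M.crossF X) fun v f => M.onF f v
  have h2 := sum_congr rfl fun f (_ : f ∈ M.crossF X) => M.face_handshake X f
  rw [sum_add_distrib, ← mul_sum, ← mul_sum, M.sum_cross_cut, ← h1] at h2
  unfold ringLen
  omega

lemma sum_cutDeg (X : Finset V) : ∑ v ∈ X, M.cutDeg X v = (M.cut X).card := by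
  have h := dcount X (M.cut X) M.inc
  unfold cutDeg
  rw [h, sum_congr rfl (g := fun _ => 1)]
  · simp
  · intro e he; simpa [cut] using he

/-- The faces seen from the inner edges: full faces inside `X` and the ring. -/
lemma sum_inner (X : Finset V) :
    2 * (M.inner X).card = ∑ f ∈ M.inF X, (univ.filter fun e => M.bd f e).card + M.ringLen X := by
  have h := dcount (univ : Finset Φ) (M.inner X) M.bd
  rw [sum_congr rfl fun e _ => M.two_faces e, sum_const, smul_eq_mul, mul_comm] at h
  rw [← h]
  have hs : M.inF X ∪ M.crossF X ⊆ univ := subset_univ _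
  rw [← sum_subset hs, sum_union (M.inF_disj_cross X)]
  · unfold ringLen
    congr 1
    refine sum_congr rfl fun f hf => ?_
    congr 1; ext e
    have := M.mem_inF.1 hf e
    simp; tauto
  · intro f _ hf
    rw [card_eq_zero, filter_eq_empty_iff]
    intro e he hb
    have := M.face_trichotomy X f
    simp only [mem_union, not_or] at hf
    have hf' : f ∈ M.inF Xᶜ := by tauto
    exact M.not_inner_compl he (M.mem_inF.1 hf' e hb)

lemma inner_mono {X Y : Finset V} (h : X ⊆ Y) : M.inner X ⊆ M.inner Y := by
  intro e he; rw [mem_inner] at *; exact fun v hv => h (he v hv)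

lemma pent_mono {X Y : Finset V} (h : X ⊆ Y) : M.pent X ≤ M.pent Y := by
  refine card_le_card (filter_subset_filter _ ?_)
  intro f hf; rw [mem_inF] at *; exact fun e he => M.inner_mono h (hf e he)

lemma pent_add (X : Finset V) : M.pent X + M.pent Xᶜ ≤ 12 := by
  unfold pent
  rw [← M.pentagons, ← card_union_of_disjoint]
  · refine card_le_card ?_
    intro f hf; simp at hf ⊢; tauto
  · exact (M.inF_disj_compl X).mono (filter_subset _ _) (filter_subset _ _)

/-- The combinatorial Gauss–Bonnet estimates for a side `X` of a small cut: the ring is short if `X`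
holds few pentagons, and `X` is large compared with its ring. -/
lemma ring_bounds (X : Finset V) (h1 : X.Nonempty) (h2 : Xᶜ.Nonempty) (hk : (M.cut X).card ≤ 5) :
    M.ringLen X + 6 ≤ M.pent X + 2 * (M.cut X).card ∧
    2 * M.ringLen X + 10 ≤ X.card + 3 * (M.cut X).card := by
  have hk3 := M.three_le_cut X h1 h2
  have hE := M.euler_le Xᶜ (by simpa using h1) (by rwa [cut_compl])
    (by rw [cut_compl]; exact card_pos.1 (by omega))
  have hEu := M.euler
  have hF := M.face_count X
  have hEd := M.edge_count X
  have hV : Fintype.card V = X.card + Xᶜ.card := (card_add_card_compl X).symm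
  have hc := M.crossF_card_le X
  have hs := M.sum_inner X
  have hh := M.handshake X
  have a1 : ∑ f ∈ M.inF X, 5 ≤ ∑ f ∈ M.inF X, (univ.filter fun e => M.bd f e).card :=
    sum_le_sum fun f _ => by rcases M.face_size f with h | h <;> omega
  have a2 : ∑ f ∈ M.inF X, ((univ.filter fun e => M.bd f e).card +
      (if (univ.filter fun e => M.bd f e).card = 5 then 1 else 0)) = ∑ f ∈ M.inF X, 6 := by
    refine sum_congr rfl fun f _ => ?_
    rcases M.face_size f with h | h <;> simp [h]
  rw [sum_add_distrib, ← card_filter] at a2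
  change _ + M.pent X = _ at a2
  simp only [sum_const, smul_eq_mul] at a1 a2
  omega

lemma two_le_cross (X : Finset V) {v : V} {e : E} (he : e ∈ M.cut X) (hv : M.inc v e) :
    2 ≤ M.cross X v := by
  rw [← M.two_faces e]
  refine card_le_card fun f hf => ?_
  have hf : M.bd f e := by simpa using hf
  rw [mem_filter, mem_crossF]
  exact ⟨⟨e, hf, he⟩, e, hf, hv⟩

/-- No small cut of a fullerene has two large sides: stated for the side with at most half of the
pentagons.  A smallest such side has a ring of faces of length at most `2k` along the cut, and
peeling this ring off leaves a smaller side with at most `k` cut edges. -/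
lemma small_side (N : ℕ) : ∀ X : Finset V, X.card = N → X.Nonempty → Xᶜ.Nonempty →
    (M.cut X).card ≤ 4 → M.pent X ≤ 6 → (M.cut X).card ≤ Xᶜ.card → X.card < (M.cut X).card := by
  induction N using Nat.strong_induction_on with
  | _ N ih =>
  intro X hN hX hXc hk hp hY
  by_contra! hn
  have hk3 := M.three_le_cut X hX hXc
  by_cases hdeg : ∃ v ∈ X, 2 ≤ M.cutDeg X v
  · -- Moving a vertex with two cut edges to the other side shrinks the cut.
    obtain ⟨v, hv, hd⟩ := hdeg
    have hsub : M.cut (X.erase v) ⊆ ((M.cut X) \ (univ.filter fun e => M.inc v e)) ∪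
        ((univ.filter fun e => M.inc v e) \ ((M.cut X).filter fun e => M.inc v e)) := by
      intro e he
      obtain ⟨⟨u, hu, hui⟩, ⟨w, hw, hwi⟩⟩ := M.mem_cut.1 he
      rw [mem_erase] at hu hw
      obtain ⟨a, b, hab, hh⟩ := M.ends e
      simp only [mem_union, mem_sdiff, mem_filter, mem_univ, true_and]
      by_cases hve : M.inc v e
      · refine Or.inr ⟨hve, fun h => ?_⟩
        obtain ⟨x, hx, hxi⟩ := (M.mem_cut.1 h.1).2
        rw [hh] at hve hui hwi hxi
        grind
      · refine Or.inl ⟨M.mem_cut.2 ⟨⟨u, hu.2, hui⟩, ⟨w, fun h => hw ⟨?_, h⟩, hwi⟩⟩, hve⟩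
        rintro rfl; exact hve hwi
    have hcard := (card_le_card hsub).trans (card_union_le _ _)
    have c1 : ((M.cut X) \ (univ.filter fun e => M.inc v e)).card + M.cutDeg X v =
        (M.cut X).card := by
      unfold cutDeg
      rw [← card_filter_add_card_filter_not (s := M.cut X) (fun e => M.inc v e), add_comm]
      congr 2; ext; simp
    have c2 : ((univ.filter fun e => M.inc v e) \
        ((M.cut X).filter fun e => M.inc v e)).card + M.cutDeg X v = 3 := by
      unfold cutDeg
      rw [← M.cubic v, card_sdiff_add_card_eq_card]
      intro e he; simp at he ⊢; exact he.2
    have hce := card_erase_of_mem hv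
    have hpos := hX.card_pos
    have hcc : Xᶜ.card ≤ (X.erase v)ᶜ.card := card_le_card (compl_subset_compl.2 (erase_subset _ _))
    have := ih (X.card - 1) (by omega) (X.erase v) hce (card_pos.1 (by omega))
      (card_pos.1 (by have := hXc.card_pos; omega)) (by omega)
      ((M.pent_mono (erase_subset _ _)).trans hp) (by omega)
    omega
  push Not at hdeg
  obtain ⟨hL1, hL2⟩ := M.ring_bounds X hX hXc (by omega)
  set k := (M.cut X).card with hkdef
  set L := M.ringLen X with hL
  set J := X.filter fun v => M.cutDeg X v = 1 with hJ
  set A := X.filter fun v => M.cutDeg X v = 0 ∧ 1 ≤ M.cross X v with hA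
  set X' := X.filter fun v => M.cross X v = 0 with hX'
  have hJc : J.card = k := by
    rw [hkdef, ← M.sum_cutDeg X, hJ, card_filter]
    refine sum_congr rfl fun v hv => ?_
    have := hdeg v hv
    split_ifs <;> omega
  have hJ2 : ∀ v, M.cutDeg X v ≠ 0 → 2 ≤ M.cross X v := by
    intro v hv
    obtain ⟨e, he⟩ := card_pos.1 (Nat.pos_of_ne_zero hv)
    rw [mem_filter] at he
    exact M.two_le_cross X he.1 he.2
  have hn3 : X.card = X'.card + J.card + A.card := by
    have hJA : Disjoint J A := by
      rw [Finset.disjoint_left]; intro v h1 h2; simp only [hJ, hA, mem_filter] at h1 h2; omega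
    have hXJ : Disjoint X' (J ∪ A) := by
      rw [Finset.disjoint_left]; intro v h1 h2
      have := hJ2 v
      simp only [hJ, hA, hX', mem_filter, mem_union] at h1 h2; omega
    rw [add_assoc, ← card_union_of_disjoint hJA, ← card_union_of_disjoint hXJ]
    congr 1; ext v
    have := hJ2 v
    have := hdeg v
    simp only [hJ, hA, hX', mem_filter, mem_union]
    constructor
    · intro h; have := hdeg v h; simp only [h, true_and]; omega
    · tauto
  have hsum : 2 * J.card + A.card ≤ L + k := by
    rw [hkdef, ← M.sum_cross X]
    have hpt : ∀ v ∈ X, 2 * (if M.cutDeg X v = 1 then 1 else 0) +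
        (if M.cutDeg X v = 0 ∧ 1 ≤ M.cross X v then 1 else 0) ≤ M.cross X v := by
      intro v hv
      have := hJ2 v
      split_ifs <;> omega
    have := sum_le_sum hpt
    rwa [sum_add_distrib, ← mul_sum, ← card_filter, ← card_filter] at this
  have hX'sub : X' ⊆ X := filter_subset _ _
  -- The cut of the peeled side: its edges all come from `A`, at most one from each vertex.
  have hcross_edge : ∀ e ∈ M.cut X', ∀ f ∈ M.crossF X, ¬ M.bd f e := by
    intro e he f hf hb
    obtain ⟨⟨u, hu, hui⟩, -⟩ := M.mem_cut.1 he
    simp only [hX', mem_filter] at hu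
    have : 0 < M.cross X u := card_pos.2 ⟨f, mem_filter.2 ⟨hf, e, hb, hui⟩⟩
    omega
  have hk' : (M.cut X').card ≤ A.card := by
    have h1 := M.sum_cutDeg X'ᶜ
    have hcd : ∀ v, M.cutDeg X'ᶜ v = M.cutDeg X' v := fun v => by unfold cutDeg; rw [cut_compl]
    simp only [hcd] at h1
    rw [cut_compl] at h1
    rw [← h1]
    have hpt : ∀ v ∈ X'ᶜ, M.cutDeg X' v ≤ if v ∈ A then 1 else 0 := by
      intro v hv
      by_cases hd0 : M.cutDeg X' v = 0
      · omega
      obtain ⟨e, he⟩ := card_pos.1 (Nat.pos_of_ne_zero hd0)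
      rw [mem_filter] at he
      have hvX : v ∈ X := by
        by_contra hvX
        obtain ⟨⟨u, hu, hui⟩, -⟩ := M.mem_cut.1 he.1
        have hec : e ∈ M.cut X := M.mem_cut.2 ⟨⟨u, hX'sub hu, hui⟩, ⟨v, hvX, he.2⟩⟩
        obtain ⟨f, hf, -⟩ := M.common_face hui hui
        exact hcross_edge e he.1 f (M.mem_crossF.2 ⟨e, hf, hec⟩) hf
      have hd1 : M.cutDeg X v = 0 := by
        by_contra hd1
        obtain ⟨d, hd⟩ := card_pos.1 (Nat.pos_of_ne_zero hd1)
        rw [mem_filter] at hd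
        obtain ⟨f, hfd, hfe⟩ := M.common_face hd.2 he.2
        exact hcross_edge e he.1 f (M.mem_crossF.2 ⟨d, hfd, hd.1⟩) hfe
      have hcr : 1 ≤ M.cross X v := by
        have : v ∉ X' := mem_compl.1 hv
        simp only [hX', mem_filter, hvX, true_and] at this
        omega
      have hvA : v ∈ A := by simp only [hA, mem_filter]; exact ⟨hvX, hd1, hcr⟩
      rw [if_pos hvA]
      obtain ⟨f, hf⟩ := card_pos.1 hcr
      obtain ⟨hfc, d, hfd, hvd⟩ := mem_filter.1 hf
      have h2 := M.cycle f v d hfd hvd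
      have h3 : M.cutDeg X' v + (univ.filter fun e => M.inc v e ∧ M.bd f e).card ≤ 3 := by
        unfold cutDeg
        rw [← M.cubic v, ← card_union_of_disjoint]
        · refine card_le_card fun x hx => ?_
          simp at hx ⊢; tauto
        · rw [Finset.disjoint_left]; intro x hx hx'
          simp only [mem_filter] at hx hx'
          exact hcross_edge x hx.1 f hfc hx'.2.2
      omega
    refine (sum_le_sum hpt).trans ?_
    rw [← card_filter]
    exact card_le_card fun v hv => (mem_filter.1 hv).2
  rcases X'.eq_empty_or_nonempty with h0 | h0
  · rw [h0, card_empty] at hn3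
    omega
  · have hcc : Xᶜ.card ≤ X'ᶜ.card := card_le_card (compl_subset_compl.2 hX'sub)
    have := ih X'.card (by omega) X' rfl h0 (card_pos.1 (by have := hXc.card_pos; omega)) (by omega)
      ((M.pent_mono hX'sub).trans hp) (by omega)
    omega

/-- A fullerene is cyclically 5-edge-connected, in the form that a cut with at most four edges has a
side with fewer vertices than the cut has edges. -/
lemma cut_small (X : Finset V) (h1 : X.Nonempty) (h2 : Xᶜ.Nonempty) (hk : (M.cut X).card ≤ 4) :
    X.card < (M.cut X).card ∨ Xᶜ.card < (M.cut X).card := by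
  by_contra! h
  have hp := M.pent_add X
  by_cases h6 : M.pent X ≤ 6
  · have := M.small_side _ X rfl h1 h2 hk h6 h.2
    omega
  · have := M.small_side _ Xᶜ rfl h2 (by simpa using h1) (by rwa [cut_compl]) (by omega)
      (by rw [cut_compl]; simpa using h.1)
    rw [cut_compl] at this
    omega

/-- Two vertex-disjoint faces `f`, `f'` with two common neighbours `g`, `h` are joined by an edge:
the four shared edges form a cut, and its small side is a pair of adjacent vertices. -/
lemma common_neighbors {f f' g h : Φ} {e₁ e₂ e₃ e₄ : E} (hfg : f ≠ g) (hfh : f ≠ h) (hgh : g ≠ h)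
    (hg' : g ≠ f') (hh' : h ≠ f') (a1 : M.bd f e₁) (a2 : M.bd g e₁)
    (b1 : M.bd g e₂) (b2 : M.bd f' e₂) (c1 : M.bd f' e₃) (c2 : M.bd h e₃)
    (d1 : M.bd h e₄) (d2 : M.bd f e₄) (hdis : ∀ v, M.onF f v → ¬ M.onF f' v) :
    ∃ e u v, u ≠ v ∧ M.inc u e ∧ M.inc v e ∧ M.onF f u ∧ M.onF f' v := by
  have two : ∀ e p q, p ≠ q → M.bd p e → M.bd q e → ∀ r, M.bd r e → r = p ∨ r = q := by
    intro e p q hpq hp hq r hr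
    obtain ⟨x, y, hxy, hh⟩ := M.faces_of_edge e
    rw [hh] at hp hq hr
    grind
  have hff : f ≠ f' := by
    rintro rfl
    obtain ⟨v, hv⟩ := M.inc_exists e₁
    exact hdis v ⟨e₁, a1, hv⟩ ⟨e₁, a1, hv⟩
  have t1 := two e₁ f g hfg a1 a2
  have t2 := two e₂ g f' hg' b1 b2
  have t3 := two e₃ f' h hh'.symm c1 c2
  have t4 := two e₄ h f hfh.symm d1 d2
  have n12 : e₁ ≠ e₂ := by rintro rfl; have := t1 f' b2; grind
  have n13 : e₁ ≠ e₃ := by rintro rfl; have := t1 f' c1; grind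
  have n14 : e₁ ≠ e₄ := by rintro rfl; have := t1 h d1; grind
  have n23 : e₂ ≠ e₃ := by rintro rfl; have := t2 h c2; grind
  have n24 : e₂ ≠ e₄ := by rintro rfl; have := t2 f d2; grind
  have n34 : e₃ ≠ e₄ := by rintro rfl; have := t3 f d2; grind
  obtain ⟨X, hX⟩ := M.exists_cut {e₁, e₂, e₃, e₄} (by
    intro p
    have m1 : M.bd p e₁ ↔ p = f ∨ p = g := ⟨t1 p, by rintro (rfl | rfl) <;> assumption⟩
    have m2 : M.bd p e₂ ↔ p = g ∨ p = f' := ⟨t2 p, by rintro (rfl | rfl) <;> assumption⟩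
    have m3 : M.bd p e₃ ↔ p = f' ∨ p = h := ⟨t3 p, by rintro (rfl | rfl) <;> assumption⟩
    have m4 : M.bd p e₄ ↔ p = h ∨ p = f := ⟨t4 p, by rintro (rfl | rfl) <;> assumption⟩
    simp only [filter_insert, filter_singleton, m1, m2, m3, m4]
    by_cases p1 : p = f
    · subst p1; simp [hfg, hfh, hff, n14]
    by_cases p2 : p = g
    · subst p2; simp [hgh, hg', n12, p1]
    by_cases p3 : p = f'
    · subst p3; simp [p1, p2, hh'.symm, n23]
    by_cases p4 : p = h
    · subst p4; simp [p1, p2, p3, n34]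
    simp [p1, p2, p3, p4])
  have hc4 : (M.cut X).card = 4 := by
    rw [hX]; simp [n12, n13, n14, n23, n24, n34]
  -- A side with two vertices consists of one end of `e₁` and one end of `e₂`, which are adjacent.
  have main : ∀ Z : Finset V, M.cut Z = {e₁, e₂, e₃, e₄} → Z.card < 4 →
      ∃ e u v, u ≠ v ∧ M.inc u e ∧ M.inc v e ∧ M.onF f u ∧ M.onF f' v := by
    intro Z hZ hZ4
    have hzc : (M.cut Z).card = 4 := by rw [hZ, ← hX, hc4]
    have hh := M.handshake Z
    obtain ⟨⟨u, hu, hue⟩, -⟩ := M.mem_cut.1 (show e₁ ∈ M.cut Z by simp [hZ])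
    obtain ⟨⟨v, hv, hve⟩, -⟩ := M.mem_cut.1 (show e₂ ∈ M.cut Z by simp [hZ])
    have huf : M.onF f u := ⟨e₁, a1, hue⟩
    have hvf : M.onF f' v := ⟨e₂, b2, hve⟩
    have huv : u ≠ v := by rintro rfl; exact hdis u huf hvf
    have hZ2 : Z.card = 2 := by omega
    have hZe : ({u, v} : Finset V) = Z := eq_of_subset_of_card_le
      (by intro x hx; simp at hx; rcases hx with rfl | rfl <;> assumption)
      (by rw [hZ2, card_pair huv])
    obtain ⟨d, hd⟩ := card_pos.1 (show 0 < (M.inner Z).card by omega)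
    have hends : (univ.filter fun x => M.inc x d) = {u, v} := eq_of_subset_of_card_le
      (by intro x hx; rw [hZe]; exact M.mem_inner.1 hd x (by simpa using hx))
      (by rw [M.two_ends, card_pair huv])
    have hmem : ∀ x, M.inc x d ↔ x = u ∨ x = v := by
      intro x
      have := Finset.ext_iff.1 hends x
      simpa using this
    exact ⟨d, u, v, huv, (hmem u).2 (Or.inl rfl), (hmem v).2 (Or.inr rfl), huf, hvf⟩
  obtain ⟨⟨u, hu, -⟩, ⟨v, hv, -⟩⟩ := M.mem_cut.1 (show e₁ ∈ M.cut X by simp [hX])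
  rcases M.cut_small X ⟨u, hu⟩ ⟨v, by simpa using hv⟩ hc4.le with hs | hs
  · exact main X hX (by omega)
  · exact main Xᶜ (by rw [cut_compl, hX]) (by omega)

end CubicMap

/-! ### Fullerene graphs as cubic maps -/

lemma card_edges_filter {V : Type} {G : SimpleGraph V} [Fintype G.edgeSet] (B : Set (Sym2 V))
    (hB : B ⊆ G.edgeSet) :
    ((univ : Finset G.edgeSet).filter fun e => e.1 ∈ B).card = B.ncard := by
  rw [← Set.ncard_coe_finset, ← Set.ncard_image_of_injective _ Subtype.val_injective]
  congr 1
  ext e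
  simp only [Set.mem_image, Finset.mem_coe, mem_filter, mem_univ, true_and]
  exact ⟨by rintro ⟨x, hx, rfl⟩; exact hx, fun h => ⟨⟨e, hB h⟩, h, rfl⟩⟩

lemma card_edges_at {V : Type} {G : SimpleGraph V} [Fintype G.edgeSet] (B : Set (Sym2 V))
    (hB : B ⊆ G.edgeSet) (v : V) :
    ((univ : Finset G.edgeSet).filter fun e => v ∈ e.1 ∧ e.1 ∈ B).card =
      {u | s(v, u) ∈ B}.ncard := by
  have h := card_edges_filter (G := G) {e | v ∈ e ∧ e ∈ B} (fun e he => hB he.2)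
  simp only [Set.mem_ofPred_eq] at h
  rw [h, ← Set.ncard_image_of_injective (f := fun u => s(v, u)) {u | s(v, u) ∈ B}]
  · congr 1
    ext e
    simp only [Set.mem_image, Set.mem_ofPred_eq]
    constructor
    · rintro ⟨hv, he⟩
      obtain ⟨u, rfl⟩ := Sym2.mem_iff_exists.1 hv
      exact ⟨u, he, rfl⟩
    · rintro ⟨u, hu, rfl⟩
      exact ⟨Sym2.mem_mk_left _ _, hu⟩
  · exact fun a b hab => Sym2.congr_right.1 hab

/-- A property that passes along the edges of a walk holds on the whole walk once it holds at the
start. -/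
lemma walk_const {V : Type} {G : SimpleGraph V} (P : V → Prop) {a b : V} (w : G.Walk a b)
    (h : ∀ x y, s(x, y) ∈ w.edges → P x → P y) (ha : P a) : ∀ x ∈ w.support, P x := by
  induction w with
  | nil => intro x hx; simp at hx; rwa [hx]
  | cons hadj p ih =>
    intro x hx
    rw [SimpleGraph.Walk.support_cons, List.mem_cons] at hx
    rcases hx with rfl | hx
    · exact ha
    · refine ih (fun x y hxy => h x y ?_) (h _ _ ?_ ha) x hx
      · rw [SimpleGraph.Walk.edges_cons]; exact List.mem_cons_of_mem _ hxy
      · rw [SimpleGraph.Walk.edges_cons]; exact List.mem_cons_self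

/-- The incidence data of a fullerene graph. -/
def toMap {V : Type} [Fintype V] (Fu : Fullerene V) [Fintype Fu.G.edgeSet]
    [Fintype Fu.faces.Face] : CubicMap V Fu.G.edgeSet Fu.faces.Face where
  inc v e := v ∈ e.1
  bd f e := e.1 ∈ Fu.faces.boundary f
  two_ends := by
    rintro ⟨e, he⟩
    induction e using Sym2.ind with
    | _ a b =>
      rw [Finset.card_eq_two]
      exact ⟨a, b, Fu.G.ne_of_adj he, by ext; simp⟩
  simple := by
    rintro ⟨e, he⟩ ⟨e', he'⟩ h
    exact Subtype.ext (Sym2.ext h)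
  cubic := by
    intro v
    have h := card_edges_at (G := Fu.G) Fu.G.edgeSet subset_rfl v
    simp only [Subtype.coe_prop, and_true] at h
    have hc : {u | s(v, u) ∈ Fu.G.edgeSet}.ncard = 3 := Fu.cubic v
    rw [← hc]
    convert h
  two_faces := by
    rintro ⟨e, he⟩
    rw [← Fu.faces.edge_faces e he, ← Set.ncard_coe_finset]
    simp
  cycle := by
    rintro f v ⟨e, he⟩ hb hv
    obtain ⟨u, w, hw, hwb⟩ := Fu.faces.boundary_cycle f
    refine Eq.trans (by convert card_edges_at _ (Fu.faces.boundary_sub f) v) ?_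
    have hvs : v ∈ w.support := by
      obtain ⟨x, rfl⟩ := Sym2.mem_iff_exists.1 hv
      exact w.fst_mem_support_of_mem_edges ((hwb _).1 hb)
    rw [← hw.ncard_neighborSet_toSubgraph_eq_two hvs]
    congr 1
    ext x
    simp only [Set.mem_ofPred_eq, hwb, SimpleGraph.Subgraph.mem_neighborSet]
    rw [← SimpleGraph.Subgraph.mem_edgeSet, SimpleGraph.Walk.mem_edges_toSubgraph]
  face_conn := by
    intro f X hX
    obtain ⟨u, w, hw, hwb⟩ := Fu.faces.boundary_cycle f
    have hstep : ∀ x y, s(x, y) ∈ w.edges → (x ∈ X ↔ y ∈ X) := by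
      intro x y hxy
      have hb := (hwb _).2 hxy
      rcases hX ⟨s(x, y), Fu.faces.boundary_sub f hb⟩ hb with h | h
      · exact iff_of_true (h x (Sym2.mem_mk_left _ _)) (h y (Sym2.mem_mk_right _ _))
      · exact iff_of_false (h x (Sym2.mem_mk_left _ _)) (h y (Sym2.mem_mk_right _ _))
    have hsup : ∀ e : Fu.G.edgeSet, e.1 ∈ Fu.faces.boundary f → ∀ v, v ∈ e.1 → v ∈ w.support := by
      intro e he v hv
      obtain ⟨x, hx⟩ := Sym2.mem_iff_exists.1 hv
      exact w.fst_mem_support_of_mem_edges (hx ▸ (hwb _).1 he)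
    by_cases hu : u ∈ X
    · have := walk_const (· ∈ X) w (fun x y h => (hstep x y h).1) hu
      exact Or.inl fun e he v hv => this v (hsup e he v hv)
    · have := walk_const (· ∉ X) w (fun x y h => mt (hstep x y h).2) hu
      exact Or.inr fun e he v hv => this v (hsup e he v hv)
  face_size := by
    intro f
    rw [card_edges_filter _ (Fu.faces.boundary_sub f)]
    exact Fu.face_size f
  pentagons := by
    simp only [card_edges_filter _ (Fu.faces.boundary_sub _)]
    rw [← Fu.pentagons, ← Set.ncard_coe_finset]
    simp
  three_conn := by
    intro S X hS h
    by_contra! hcon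
    obtain ⟨⟨x, hxX, hxS⟩, ⟨y, hyX, hyS⟩⟩ := hcon
    have hc := Fu.threeConnected (S : Set V) (by rwa [Set.ncard_coe_finset])
    obtain ⟨w⟩ := hc.preconnected ⟨x, by simpa using hxS⟩ ⟨y, by simpa using hyS⟩
    refine hyX (walk_const (fun z => z.1 ∈ X) w (fun a b hab ha => ?_) hxX _ w.end_mem_support)
    by_contra hb
    have hadj := w.adj_of_mem_edges hab
    have ha' := a.2
    have hb' := b.2
    simp only [SimpleGraph.Subgraph.coe_adj, SimpleGraph.Subgraph.deleteVerts_adj,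
      SimpleGraph.Subgraph.top_adj, Finset.mem_coe] at hadj
    rcases h ⟨s(a.1, b.1), hadj.2.2.2.2⟩ a.1 b.1 (Sym2.mem_mk_left _ _) (Sym2.mem_mk_right _ _) ha hb
      with h | h
    · exact hadj.2.1 h
    · exact hadj.2.2.2.1 h

end
end FullereneCut

/-- If `f` and `f'` are two vertex-disjoint faces of a fullerene graph with no edge
joining them, then they have at most one common neighboring face. -/
theorem at_most_one_common_neighboring_face {V : Type} [Fintype V] (Fu : Fullerene V)
    (f f' : Fu.faces.Face)
    (hdisj : Disjoint (Fu.faceVerts f) (Fu.faceVerts f'))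
    (hnoedge : edgesBetween Fu.G (Fu.faceVerts f) (Fu.faceVerts f') = ∅) :
    {g : Fu.faces.Face | Fu.NeighboringFace g f ∧ Fu.NeighboringFace g f'}.Subsingleton := by
  rintro g ⟨⟨hgf, e₁, a2, a1⟩, hgf', e₂, b1, b2⟩ h ⟨⟨hhf, e₄, d1, d2⟩, hhf', e₃, c2, c1⟩
  by_contra hgh
  have := Fu.faces.faceFinite
  let := Fintype.ofFinite Fu.faces.Face
  let := Fintype.ofFinite Fu.G.edgeSet
  have on_iff : ∀ p v, (FullereneCut.toMap Fu).onF p v → v ∈ Fu.faceVerts p := by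
    rintro p v ⟨e, he, hv⟩
    exact ⟨e.1, he, hv⟩
  have hsub := fun p => Fu.faces.boundary_sub p
  obtain ⟨e, u, v, huv, hu, hv, huf, hvf⟩ := (FullereneCut.toMap Fu).common_neighbors
    (f := f) (f' := f') (g := g) (h := h)
    (e₁ := ⟨e₁, hsub f a1⟩) (e₂ := ⟨e₂, hsub g b1⟩) (e₃ := ⟨e₃, hsub f' c1⟩) (e₄ := ⟨e₄, hsub h d1⟩)
    hgf.symm hhf.symm hgh hgf' hhf' a1 a2 b1 b2 c1 c2 d1 d2
    (fun v hv hv' => Set.disjoint_left.1 hdisj (on_iff f v hv) (on_iff f' v hv'))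
  have he : e.1 = s(u, v) := (Sym2.mem_and_mem_iff huv).1 ⟨hu, hv⟩
  have hadj : Fu.G.Adj u v := by
    have := e.2
    rwa [he] at this
  have : e.1 ∈ edgesBetween Fu.G (Fu.faceVerts f) (Fu.faceVerts f') :=
    ⟨u, v, hadj, he, on_iff f u huf, on_iff f' v hvf⟩
  rw [hnoedge] at this
  exact this
end

section
/- Every fullerene graph is cyclically 5-edge-connected, and 5 is the exact cyclic edge-connectivity: the edges pointing outward from any pentagonal face form a cyclic 5-edge-cut. -/
/-! The proof replaces planarity by counting. In a cubic graph whose faces have size 5 or 6, with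
twelve pentagons, `V - E + F = 2` by arithmetic (`euler`). Let `X` be a vertex set with `k ≤ 5`
outgoing edges, nonempty and with nonempty complement. Three-edge-connectivity makes both sides
connected (`conn`). The face boundaries inside either side are independent cycles mod 2, so
each side has Euler characteristic at most 1; as the characteristics add up to at least 2, both
are equal to 1 (`disc`). It follows that `X` contains `6 + ℓ - 2k` pentagons, where `ℓ` is the
length of its boundary walk (`pents_count`).

Suppose now that `k ≤ 4` and that both sides contain cycles. One side `X` has at most six
pentagons, so `ℓ ≤ 2k`. A vertex with two outgoing edges may be removed from `X`; otherwise the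
vertices of `X` on faces crossed by the cut number at most `ℓ`, and removing them all leaves a
set with at most `ℓ - k ≤ k` outgoing edges (`card_rim_le`, `card_cut_peel`). The descent ends
only when the remainder is empty or a tree, and then `X` has fewer faces than pentagons
(`descent`).

For a pentagon, at most five edges go out, by counting degrees, and fewer are excluded by the
above; a cycle on the other side is supplied by a face disjoint from the pentagon
(`pentagon_cut`).
-/

open SimpleGraph

/-! ### Double counting in a fullerene map -/

section

open scoped Classical

/-- The incidence data of a fullerene: vertices, edges and faces, with `inc v e` for `v` an end of
`e` and `on e f` for `e` on the boundary of `f`. `face_conn` says that a face boundary is connected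
(a vertex set closed along its edges contains all or none of its vertices), and `edge_conn` is
3-edge-connectivity. That the surface is a sphere is not assumed: the twelve pentagons force it,
see `euler`. -/
structure FullereneMap (V E F : Type) [Fintype V] [Fintype E] [Fintype F] where
  inc : V → E → Prop
  on : E → F → Prop
  card_ends : ∀ e, (Finset.univ.filter fun v => inc v e).card = 2
  card_edges : ∀ v, (Finset.univ.filter fun e => inc v e).card = 3
  card_faces : ∀ e, (Finset.univ.filter fun f => on e f).card = 2
  face_deg : ∀ f v, (∃ e, on e f ∧ inc v e) →
    (Finset.univ.filter fun e => on e f ∧ inc v e).card = 2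
  face_conn : ∀ f (X : Finset V),
    (∀ e, on e f → ∀ u v, inc u e → inc v e → u ∈ X → v ∈ X) →
    ∀ e e' u v, on e f → on e' f → inc u e → inc v e' → u ∈ X → v ∈ X
  edge_conn : ∀ X : Finset V, X.Nonempty → Xᶜ.Nonempty →
    3 ≤ (Finset.univ.filter fun e => ∃ u v, inc u e ∧ inc v e ∧ u ∈ X ∧ v ∉ X).card
  face_size : ∀ f, (Finset.univ.filter fun e => on e f).card = 5 ∨
    (Finset.univ.filter fun e => on e f).card = 6
  pent : (Finset.univ.filter fun f => (Finset.univ.filter fun e => on e f).card = 5).card = 12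

namespace FullereneMap

variable {V E F : Type} [Fintype V] [Fintype E] [Fintype F] (M : FullereneMap V E F)

/-- The edges leaving `X`. -/
noncomputable def cut (X : Finset V) : Finset E :=
  Finset.univ.filter fun e => ∃ u v, M.inc u e ∧ M.inc v e ∧ u ∈ X ∧ v ∉ X

/-- The edges with both ends in `X`. -/
noncomputable def inn (X : Finset V) : Finset E :=
  Finset.univ.filter fun e => ∀ v, M.inc v e → v ∈ X

/-- The boundary edges of a face. -/
noncomputable def bd (f : F) : Finset E := Finset.univ.filter fun e => M.on e f

/-- The vertex `v` lies on the face `f`. -/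
def At (f : F) (v : V) : Prop := ∃ e, M.on e f ∧ M.inc v e

/-- The faces whose boundary lies within `X`. -/
noncomputable def inF (X : Finset V) : Finset F :=
  Finset.univ.filter fun f => ∀ e, M.on e f → e ∈ M.inn X

/-- The faces crossed by the cut around `X`. -/
noncomputable def crF (X : Finset V) : Finset F :=
  Finset.univ.filter fun f => ∃ e, M.on e f ∧ e ∈ M.cut X

theorem mem_cut {X : Finset V} {e : E} :
    e ∈ M.cut X ↔ ∃ u v, M.inc u e ∧ M.inc v e ∧ u ∈ X ∧ v ∉ X := by simp [cut]

theorem mem_inn {X : Finset V} {e : E} : e ∈ M.inn X ↔ ∀ v, M.inc v e → v ∈ X := by simp [inn]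

theorem mem_bd {f : F} {e : E} : e ∈ M.bd f ↔ M.on e f := by simp [bd]

theorem mem_inF {X : Finset V} {f : F} : f ∈ M.inF X ↔ ∀ e, M.on e f → e ∈ M.inn X := by
  simp [inF]

theorem mem_crF {X : Finset V} {f : F} : f ∈ M.crF X ↔ ∃ e, M.on e f ∧ e ∈ M.cut X := by
  simp [crF]

theorem double_count {α β : Type} (s : Finset α) (t : Finset β) (r : α → β → Prop) :
    ∑ a ∈ s, (t.filter fun b => r a b).card = ∑ b ∈ t, (s.filter fun a => r a b).card :=
  Finset.sum_card_bipartiteAbove_eq_sum_card_bipartiteBelow r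

/-- The number of ends of `e` in `X` is 2, 1 or 0, according to whether `e` is inside `X`, leaves
`X`, or avoids `X`. -/
theorem ends_count (X : Finset V) (e : E) : (X.filter fun v => M.inc v e).card =
    2 * (if e ∈ M.inn X then 1 else 0) + (if e ∈ M.cut X then 1 else 0) := by
  have h2 := M.card_ends e
  have hs : (X.filter fun v => M.inc v e) ⊆ Finset.univ.filter fun v => M.inc v e :=
    Finset.filter_subset_filter _ (Finset.subset_univ _)
  have hle := Finset.card_le_card hs
  by_cases hi : e ∈ M.inn X
  · have hc : e ∉ M.cut X := by
      rw [mem_cut]; rintro ⟨u, v, hu, hv, huX, hvX⟩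
      exact hvX (M.mem_inn.1 hi v hv)
    have : (X.filter fun v => M.inc v e) = Finset.univ.filter fun v => M.inc v e := by
      ext v; simp only [Finset.mem_filter, Finset.mem_univ, true_and]
      exact ⟨fun h => h.2, fun h => ⟨M.mem_inn.1 hi v h, h⟩⟩
    rw [this, h2]; simp [hi, hc]
  · have hi' := hi
    rw [mem_inn] at hi'
    push Not at hi'
    obtain ⟨w, hw, hwX⟩ := hi'
    have hlt : (X.filter fun v => M.inc v e).card < 2 := by
      rw [← h2]
      apply Finset.card_lt_card
      refine ⟨hs, fun h => hwX ?_⟩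
      have := h (show w ∈ Finset.univ.filter fun v => M.inc v e by simpa using hw)
      exact (Finset.mem_filter.1 this).1
    by_cases hc : e ∈ M.cut X
    · obtain ⟨u, v, hu, hv, huX, hvX⟩ := M.mem_cut.1 hc
      have : 0 < (X.filter fun v => M.inc v e).card :=
        Finset.card_pos.2 ⟨u, by simp [hu, huX]⟩
      simp only [hi, hc, if_true, if_false]; omega
    · have : (X.filter fun v => M.inc v e) = ∅ := by
        ext v
        simp only [Finset.mem_filter, Finset.notMem_empty, iff_false, not_and]
        intro hvX hv
        exact hc (M.mem_cut.2 ⟨v, w, hv, hw, hvX, hwX⟩)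
      rw [this]; simp [hi, hc]

/-- The handshake lemma for the vertices of `X`, relative to a set `S` of edges. -/
theorem handshake (X : Finset V) (S : Finset E) :
    ∑ v ∈ X, (S.filter fun e => M.inc v e).card =
      2 * (S ∩ M.inn X).card + (S ∩ M.cut X).card := by
  rw [double_count, Finset.sum_congr rfl fun e _ => M.ends_count X e, Finset.sum_add_distrib,
    ← Finset.mul_sum, ← Finset.card_filter, ← Finset.card_filter, Finset.filter_mem_eq_inter,
    Finset.filter_mem_eq_inter]

theorem three_mul_card (X : Finset V) : 3 * X.card = 2 * (M.inn X).card + (M.cut X).card := by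
  have h := M.handshake X Finset.univ
  simp only [M.card_edges, Finset.sum_const, smul_eq_mul, Finset.univ_inter] at h
  omega

/-- Each face boundary is 2-regular. -/
theorem deg_eq (f : F) (v : V) :
    ((M.bd f).filter fun e => M.inc v e).card = 2 * if M.At f v then 1 else 0 := by
  have : ((M.bd f).filter fun e => M.inc v e) =
      Finset.univ.filter fun e => M.on e f ∧ M.inc v e := by
    ext e; simp [bd]
  rw [this]
  by_cases h : M.At f v
  · rw [M.face_deg f v h]; simp [h]
  · simp only [h, if_false, mul_zero, Finset.card_eq_zero]
    ext e
    simp only [Finset.mem_filter, Finset.mem_univ, true_and, Finset.notMem_empty, iff_false]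
    exact fun hx => h ⟨e, hx⟩

/-- In particular a face crosses every cut an even number of times. -/
theorem face_verts (f : F) (X : Finset V) : 2 * (X.filter fun v => M.At f v).card =
    2 * (M.bd f ∩ M.inn X).card + (M.bd f ∩ M.cut X).card := by
  rw [← handshake, Finset.sum_congr rfl fun v _ => M.deg_eq f v, ← Finset.mul_sum,
    ← Finset.card_filter]

theorem sum_bd (S : Finset E) : ∑ f, (M.bd f ∩ S).card = 2 * S.card := by
  have h : ∀ f, (M.bd f ∩ S) = S.filter fun e => M.on e f := by
    intro f; ext e; simp [bd, and_comm]
  simp only [h]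
  rw [double_count]
  simp [M.card_faces, mul_comm]

/-- Exactly three faces meet at a vertex: the three edges there lie on two faces each, and each
face at the vertex uses two of them. -/
theorem card_At (v : V) : (Finset.univ.filter fun f => M.At f v).card = 3 := by
  have h1 : ∑ f, ((Finset.univ.filter fun e => M.inc v e).filter fun e => M.on e f).card = 6 := by
    rw [double_count]; simp [M.card_faces, M.card_edges]
  have h2 : ∀ f, ((Finset.univ.filter fun e => M.inc v e).filter fun e => M.on e f).card =
      2 * if M.At f v then 1 else 0 := by
    intro f; rw [← deg_eq]; congr 1; ext e; simp [bd, and_comm]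
  rw [Finset.sum_congr rfl fun f _ => h2 f, ← Finset.mul_sum, ← Finset.card_filter] at h1
  omega

/-- A nonempty set of faces whose mod 2 boundary vanishes covers every vertex. Around a vertex any
two faces share an edge, so such a set contains all or none of the faces there, and this alternative
is constant along edges. -/
theorem closed_faces (S : Finset F)
    (hS : ∀ e, Even (S.filter fun f => M.on e f).card) (hne : S.Nonempty) (v : V) :
    ∃ f ∈ S, M.At f v := by
  have hall : ∀ e f g, f ∈ S → M.on e f → M.on e g → g ∈ S := by
    intro e f g hf hef heg
    by_contra hg
    have hlt : (S.filter fun f => M.on e f).card < 2 := by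
      rw [← M.card_faces e]
      apply Finset.card_lt_card
      refine ⟨Finset.filter_subset_filter _ (Finset.subset_univ _), fun h => hg ?_⟩
      exact (Finset.mem_filter.1 (h (show g ∈ _ by simpa using heg))).1
    have hpos : 0 < (S.filter fun f => M.on e f).card := Finset.card_pos.2 ⟨f, by simp [hf, hef]⟩
    have := hS e
    rw [Nat.even_iff] at this
    omega
  -- at a vertex, any two faces share an edge
  have hshare : ∀ w f g, M.At f w → M.At g w → ∃ e, M.on e f ∧ M.on e g := by
    intro w f g hf hg
    by_contra hcon
    push Not at hcon
    have h1 := M.face_deg f w hf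
    have h2 := M.face_deg g w hg
    have h3 := M.card_edges w
    have hd : Disjoint (Finset.univ.filter fun e => M.on e f ∧ M.inc w e)
        (Finset.univ.filter fun e => M.on e g ∧ M.inc w e) := by
      rw [Finset.disjoint_left]
      intro e he he'
      simp only [Finset.mem_filter, Finset.mem_univ, true_and] at he he'
      exact hcon e he.1 he'.1
    have h4 := Finset.card_union_of_disjoint hd
    have h5 : (Finset.univ.filter fun e => M.on e f ∧ M.inc w e) ∪
        (Finset.univ.filter fun e => M.on e g ∧ M.inc w e) ⊆
        Finset.univ.filter fun e => M.inc w e := by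
      intro e he
      simp only [Finset.mem_union, Finset.mem_filter, Finset.mem_univ, true_and] at he ⊢
      tauto
    have := Finset.card_le_card h5
    omega
  have hvert : ∀ w f g, f ∈ S → M.At f w → M.At g w → g ∈ S := by
    intro w f g hf hfw hgw
    obtain ⟨e, h1, h2⟩ := hshare w f g hfw hgw
    exact hall e f g hf h1 h2
  by_contra hv
  set W : Finset V := Finset.univ.filter fun w => ∃ f ∈ S, M.At f w with hW
  have hWc : Wᶜ.Nonempty := ⟨v, by simpa [hW] using hv⟩
  have hWn : W.Nonempty := by
    obtain ⟨f, hf⟩ := hne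
    have hb : 0 < (Finset.univ.filter fun e => M.on e f).card := by
      have := M.face_size f; omega
    obtain ⟨e, he⟩ := Finset.card_pos.1 hb
    have hb2 : 0 < (Finset.univ.filter fun w => M.inc w e).card := by
      have := M.card_ends e; omega
    obtain ⟨w, hw⟩ := Finset.card_pos.1 hb2
    simp only [Finset.mem_filter, Finset.mem_univ, true_and] at he hw
    exact ⟨w, by simpa [hW] using ⟨f, hf, e, he, hw⟩⟩
  have h3 := M.edge_conn W hWn hWc
  obtain ⟨e, he⟩ := Finset.card_pos.1 (show 0 < _ by exact lt_of_lt_of_le (by norm_num) h3)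
  simp only [Finset.mem_filter, Finset.mem_univ, true_and, hW] at he
  obtain ⟨x, y, hx, hy, ⟨f, hf, hfx⟩, hyn⟩ := he
  have hb : 0 < (Finset.univ.filter fun f => M.on e f).card := by
    have := M.card_faces e; omega
  obtain ⟨g, hg⟩ := Finset.card_pos.1 hb
  simp only [Finset.mem_filter, Finset.mem_univ, true_and] at hg
  exact hyn ⟨g, hvert x f g hf hfx ⟨e, hg, hx⟩, e, hg, hy⟩

theorem cut_compl (X : Finset V) : M.cut Xᶜ = M.cut X := by
  ext e; simp only [mem_cut, Finset.mem_compl, not_not]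
  constructor <;> rintro ⟨u, v, hu, hv, h1, h2⟩ <;> exact ⟨v, u, hv, hu, h2, h1⟩

/-- An edge has no third end. -/
theorem ends_eq {e : E} {u v w : V} (hu : M.inc u e) (hv : M.inc v e) (huv : u ≠ v)
    (hw : M.inc w e) : w = u ∨ w = v := by
  by_contra hcon
  push Not at hcon
  have h3 : ({u, v, w} : Finset V).card = 3 := by
    rw [Finset.card_eq_three]; exact ⟨u, v, w, huv, hcon.1.symm, hcon.2.symm, rfl⟩
  have h4 : ({u, v, w} : Finset V) ⊆ Finset.univ.filter fun v => M.inc v e := by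
    intro x hx
    simp only [Finset.mem_insert, Finset.mem_singleton] at hx
    rcases hx with rfl | rfl | rfl <;> simpa
  have := Finset.card_le_card h4
  rw [M.card_ends e] at this
  omega

/-- A set with at most five outgoing edges is connected: a splitting into two parts without edges
between them would give two disjoint cuts of size at least three. Connectedness is expressed by
the absence of a proper nonempty subset `Z` closed along the edges inside `X`. -/
theorem conn (X : Finset V) (hk : (M.cut X).card ≤ 5) (hc : Xᶜ.Nonempty) (Z : Finset V)
    (hZX : Z ⊆ X) (hZ : Z.Nonempty)
    (hcl : ∀ e ∈ M.inn X, ∀ u v, M.inc u e → M.inc v e → u ∈ Z → v ∈ Z) : Z = X := by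
  by_contra hne
  have hR : (X \ Z).Nonempty := by
    rw [Finset.sdiff_nonempty]; exact fun h => hne (hZX.antisymm h)
  obtain ⟨y, hy⟩ := hc
  have h1 := M.edge_conn Z hZ ⟨y, by
    simp only [Finset.mem_compl] at hy ⊢; exact fun h => hy (hZX h)⟩
  have h2 := M.edge_conn (X \ Z) hR ⟨y, by
    simp only [Finset.mem_compl, Finset.mem_sdiff] at hy ⊢; exact fun h => hy h.1⟩
  have key : ∀ e u v, M.inc u e → M.inc v e → u ∈ Z → v ∉ Z → v ∉ X := by
    intro e u v hu hv hZu hZv hvX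
    apply hZv
    refine hcl e ?_ u v hu hv hZu
    rw [mem_inn]
    intro w hw
    rcases M.ends_eq hu hv (fun h => hZv (h ▸ hZu)) hw with rfl | rfl
    · exact hZX hZu
    · exact hvX
  have hd : Disjoint (M.cut Z) (M.cut (X \ Z)) := by
    rw [Finset.disjoint_left]
    intro e he he'
    obtain ⟨u, v, hu, hv, huZ, hvZ⟩ := M.mem_cut.1 he
    obtain ⟨a, b, ha, hb, haR, hbR⟩ := M.mem_cut.1 he'
    rw [Finset.mem_sdiff] at haR
    exact key e u a hu ha huZ haR.2 haR.1
  have hsub : M.cut Z ∪ M.cut (X \ Z) ⊆ M.cut X := by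
    intro e he
    rw [Finset.mem_union] at he
    rw [mem_cut]
    rcases he with he | he
    · obtain ⟨u, v, hu, hv, huZ, hvZ⟩ := M.mem_cut.1 he
      exact ⟨u, v, hu, hv, hZX huZ, key e u v hu hv huZ hvZ⟩
    · obtain ⟨a, b, ha, hb, haR, hbR⟩ := M.mem_cut.1 he
      rw [Finset.mem_sdiff] at haR hbR
      refine ⟨a, b, ha, hb, haR.1, fun hbX => ?_⟩
      have hbZ : b ∈ Z := by by_contra h; exact hbR ⟨hbX, h⟩
      exact key e b a hb ha hbZ haR.2 haR.1
  have h5 := Finset.card_le_card hsub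
  rw [Finset.card_union_of_disjoint hd] at h5
  have h1' : 3 ≤ (M.cut Z).card := h1
  have h2' : 3 ≤ (M.cut (X \ Z)).card := h2
  omega

/-! ### Mod 2 homology and the Euler characteristic of a piece -/

/-- The vertex-edge incidence matrix of the piece `X`, over `ZMod 2`. -/
noncomputable def incMat (X : Finset V) : Matrix X (M.inn X) (ZMod 2) :=
  fun v e => if M.inc v e then 1 else 0

/-- The boundary matrix, over `ZMod 2`, of the faces contained in `X`. -/
noncomputable def bdMat (X : Finset V) : Matrix (M.inn X) (M.inF X) (ZMod 2) :=
  fun e f => if M.on e f then 1 else 0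

theorem zmod_cast_card {α : Type} [Fintype α] (S : Finset α) (p : α → Prop)
    [DecidablePred p] :
    ∑ a : S, (if p a then (1 : ZMod 2) else 0) = ((S.filter p).card : ZMod 2) := by
  rw [Finset.sum_coe_sort S (fun a => if p a then (1 : ZMod 2) else 0), Finset.card_filter]
  simp

theorem inc_mul_bd (X : Finset V) : M.incMat X * M.bdMat X = 0 := by
  ext v f
  simp only [Matrix.mul_apply, incMat, bdMat, Matrix.zero_apply, ite_mul, one_mul, zero_mul,
    ← ite_and]
  rw [zmod_cast_card (M.inn X) (fun e => M.inc v e ∧ M.on e f)]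
  have : ((M.inn X).filter fun e => M.inc v e ∧ M.on e f) =
      (M.bd f).filter fun e => M.inc v e := by
    ext e
    simp only [Finset.mem_filter, mem_bd]
    exact ⟨fun h => ⟨h.2.2, h.2.1⟩, fun h => ⟨M.mem_inF.1 f.2 e h.1, h.2, h.1⟩⟩
  rw [this, deg_eq, Nat.cast_mul]
  simp [show (2 : ZMod 2) = 0 from rfl]

/-- The boundaries of the faces inside a proper subset are linearly independent mod 2: a relation
would be a set of faces without boundary, which by `closed_faces` reaches every vertex. -/
theorem rank_bd (X : Finset V) (hc : Xᶜ.Nonempty) : (M.bdMat X).rank = (M.inF X).card := by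
  have hinj : Function.Injective (M.bdMat X).mulVecLin := by
    rw [← LinearMap.ker_eq_bot, LinearMap.ker_eq_bot']
    intro g hg
    by_contra hne
    obtain ⟨f0, hf0⟩ := Function.ne_iff.1 hne
    set S : Finset F := Finset.univ.filter fun f => ∃ h : f ∈ M.inF X, g ⟨f, h⟩ ≠ 0 with hS
    have hSin : ∀ f ∈ S, f ∈ M.inF X := by
      intro f hf; rw [hS, Finset.mem_filter] at hf; exact hf.2.1
    obtain ⟨y, hy⟩ := hc
    obtain ⟨f, hfS, e, hef, hye⟩ := M.closed_faces S (fun e => by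
      by_cases he : e ∈ M.inn X
      · have h0 := congrFun hg ⟨e, he⟩
        simp only [Matrix.mulVecLin_apply, Matrix.mulVec, dotProduct, bdMat, Pi.zero_apply,
          ite_mul, one_mul, zero_mul] at h0
        have h1 : ∀ f : M.inF X, (if M.on e f then g f else 0) =
            if (f : F) ∈ S ∧ M.on e f then (1 : ZMod 2) else 0 := by
          intro f
          have hm : (f : F) ∈ S ↔ g f ≠ 0 := by simp [hS]
          by_cases ho : M.on e f
          · by_cases hz : g f = 0
            · simp [hz, hm]
            · have h01 : ∀ a : ZMod 2, a ≠ 0 → a = 1 := by decide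
              simp [ho, hm, h01 _ hz]
          · simp [ho]
        rw [Finset.sum_congr rfl fun f _ => h1 f,
          zmod_cast_card (M.inF X) (fun f => f ∈ S ∧ M.on e f), ZMod.natCast_eq_zero_iff_even] at h0
        convert h0 using 2
        ext f
        simp only [Finset.mem_filter]
        exact ⟨fun h => ⟨hSin f h.1, h⟩, fun h => h.2⟩
      · have : (S.filter fun f => M.on e f) = ∅ := by
          ext f
          simp only [Finset.mem_filter, Finset.notMem_empty, iff_false, not_and]
          exact fun hf ho => he (M.mem_inF.1 (hSin f hf) e ho)
        rw [this]; simp) ⟨f0, by rw [hS, Finset.mem_filter]; exact ⟨Finset.mem_univ _, f0.2, hf0⟩⟩ y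
    have := M.mem_inn.1 (M.mem_inF.1 (hSin f hfS) e hef) y hye
    simp only [Finset.mem_compl] at hy
    exact hy this
  rw [Matrix.rank, LinearMap.finrank_range_of_inj hinj]
  simp

/-- The rank of the incidence matrix of a connected graph: the kernel of its transpose consists of
the functions constant on `X`. -/
theorem rank_inc (X : Finset V) (hk : (M.cut X).card ≤ 5) (hc : Xᶜ.Nonempty) :
    X.card ≤ (M.incMat X).rank + 1 := by
  rw [← Matrix.rank_transpose, Matrix.rank]
  have hrn := LinearMap.finrank_range_add_finrank_ker (M.incMat X).transpose.mulVecLin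
  simp only [Module.finrank_fintype_fun_eq_card, Fintype.card_coe] at hrn
  have hker : LinearMap.ker (M.incMat X).transpose.mulVecLin ≤
      Submodule.span (ZMod 2) {fun _ => 1} := by
    intro g hg
    rw [LinearMap.mem_ker] at hg
    rw [Submodule.mem_span_singleton]
    -- the support of a cocycle is a union of components
    set Z : Finset V := X.filter fun v => ∃ h : v ∈ X, g ⟨v, h⟩ ≠ 0 with hZ
    have h01 : ∀ a : ZMod 2, a ≠ 0 → a = 1 := by decide
    by_cases hne : Z.Nonempty
    · have hZX := M.conn X hk hc Z (Finset.filter_subset _ _) hne (by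
        intro e he u v hu hv huZ
        have h0 := congrFun hg ⟨e, he⟩
        simp only [Matrix.mulVecLin_apply, Matrix.mulVec, dotProduct, incMat,
          Matrix.transpose_apply, Pi.zero_apply, ite_mul, one_mul, zero_mul] at h0
        have h1 : ∀ w : X, (if M.inc w e then g w else 0) =
            if (w : V) ∈ Z ∧ M.inc w e then (1 : ZMod 2) else 0 := by
          intro w
          have hm : (w : V) ∈ Z ↔ g w ≠ 0 := by simp [hZ]
          by_cases ho : M.inc w e
          · by_cases hz : g w = 0
            · simp [hz, hm]
            · simp [ho, hm, h01 _ hz]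
          · simp [ho]
        rw [Finset.sum_congr rfl fun f _ => h1 f,
          zmod_cast_card X (fun w => w ∈ Z ∧ M.inc w e), ZMod.natCast_eq_zero_iff_even,
          Nat.even_iff] at h0
        by_contra hvZ
        have hlt : (X.filter fun w => w ∈ Z ∧ M.inc w e).card < 2 := by
          rw [← M.card_ends e]
          apply Finset.card_lt_card
          refine ⟨fun w hw => by simpa using (Finset.mem_filter.1 hw).2.2, fun h => hvZ ?_⟩
          exact (Finset.mem_filter.1 (h (show v ∈ _ by simpa using hv))).2.1
        have hpos : 0 < (X.filter fun w => w ∈ Z ∧ M.inc w e).card :=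
          Finset.card_pos.2 ⟨u, by simp [huZ, hu, (Finset.mem_filter.1 huZ).1]⟩
        omega)
      refine ⟨1, ?_⟩
      ext v
      have hv : (v : V) ∈ Z := by rw [hZX]; exact v.2
      obtain ⟨_, _, h⟩ := Finset.mem_filter.1 hv
      simp [h01 _ h]
    · refine ⟨0, ?_⟩
      ext v
      by_contra hv
      apply hne
      refine ⟨v, Finset.mem_filter.2 ⟨v.2, v.2, fun h => hv ?_⟩⟩
      simp only [Subtype.coe_eta] at h
      simp [h]
  have h1 := Submodule.finrank_mono hker
  have h2 := finrank_span_le_card (R := ZMod 2) ({fun _ => 1} : Set (X → ZMod 2))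
  simp only [Set.toFinset_singleton, Finset.card_singleton] at h2
  omega

/-- The Euler characteristic of a connected proper piece is at most 1, since the independent face
boundaries lie in its cycle space. -/
theorem faces_le (X : Finset V) (hk : (M.cut X).card ≤ 5) (hc : Xᶜ.Nonempty) :
    (M.inF X).card + X.card ≤ (M.inn X).card + 1 := by
  have h1 := Matrix.rank_add_rank_le_card_of_mul_eq_zero (M.inc_mul_bd X)
  have h2 := M.rank_inc X hk hc
  rw [M.rank_bd X hc, Fintype.card_coe] at h1
  omega

/-- The face size condition as a single equation, which sums well. -/
theorem card_bd (f : F) : (M.bd f).card + (if (M.bd f).card = 5 then 1 else 0) = 6 := by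
  have h : (M.bd f).card = 5 ∨ (M.bd f).card = 6 := M.face_size f
  rcases h with h | h <;> simp [h]

/-- The pentagons of a set of faces. -/
noncomputable def pents (S : Finset F) : Finset F := S.filter fun f => (M.bd f).card = 5

theorem sum_card_bd (S : Finset F) :
    ∑ f ∈ S, (M.bd f).card + (M.pents S).card = 6 * S.card := by
  rw [pents, Finset.card_filter, ← Finset.sum_add_distrib,
    Finset.sum_congr rfl fun f _ => M.card_bd f]
  simp [mul_comm]

theorem card_pents : (M.pents Finset.univ).card = 12 := M.pent

/-- `V - E + F = 2` and `3 V = 2 E`, as equations in `ℕ`. The first follows from the face sizes, since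
`2 E = 6 F - 12`. -/
theorem euler (M : FullereneMap V E F) : 2 * Fintype.card F = Fintype.card V + 4 ∧
    3 * Fintype.card V = 2 * Fintype.card E := by
  have h1 := M.sum_card_bd Finset.univ
  have h2 := M.sum_bd Finset.univ
  simp only [Finset.inter_univ] at h2
  have h3 := M.three_mul_card Finset.univ
  have h4 : M.inn Finset.univ = Finset.univ := by ext; simp [inn]
  have h5 : M.cut Finset.univ = ∅ := by ext; simp [cut]
  rw [h2, card_pents] at h1
  rw [h4, h5] at h3
  simp only [Finset.card_univ, Finset.card_empty] at h1 h3
  omega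

theorem exists_end (e : E) : ∃ u, M.inc u e := by
  have : 0 < (Finset.univ.filter fun v => M.inc v e).card := by
    have := M.card_ends e; omega
  obtain ⟨u, hu⟩ := Finset.card_pos.1 this
  exact ⟨u, by simpa using hu⟩

theorem exists_bd (f : F) : ∃ e, M.on e f := by
  have : 0 < (M.bd f).card := by
    have : (M.bd f).card = 5 ∨ (M.bd f).card = 6 := M.face_size f
    omega
  obtain ⟨u, hu⟩ := Finset.card_pos.1 this
  exact ⟨u, by simpa [bd] using hu⟩

/-- A face not crossed by the cut around `X` lies inside `X` or inside its complement. -/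
theorem face_trichotomy (X : Finset V) (f : F) (hf : f ∉ M.crF X) :
    f ∈ M.inF X ∨ f ∈ M.inF Xᶜ := by
  have hno : ∀ e, M.on e f → e ∉ M.cut X := fun e he hec => hf (M.mem_crF.2 ⟨e, he, hec⟩)
  have hcl : ∀ e, M.on e f → ∀ u v, M.inc u e → M.inc v e → u ∈ X → v ∈ X := by
    intro e he u v hu hv huX
    by_contra hvX
    exact hno e he (M.mem_cut.2 ⟨u, v, hu, hv, huX, hvX⟩)
  have hconn := M.face_conn f X hcl
  obtain ⟨e, he⟩ := M.exists_bd f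
  obtain ⟨u, hu⟩ := M.exists_end e
  by_cases huX : u ∈ X
  · left; rw [mem_inF]; intro e' he'; rw [mem_inn]; intro v hv
    exact hconn e e' u v he he' hu hv huX
  · right; rw [mem_inF]; intro e' he'; rw [mem_inn]; intro v hv
    rw [Finset.mem_compl]
    exact fun hvX => huX (hconn e' e v u he' he hv hu hvX)

theorem inn_disj_cut (X : Finset V) : Disjoint (M.inn X) (M.cut X) := by
  rw [Finset.disjoint_left]
  intro e he hc
  obtain ⟨u, v, hu, hv, _, hvX⟩ := M.mem_cut.1 hc
  exact hvX (M.mem_inn.1 he v hv)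

theorem inn_disj_compl (X : Finset V) : Disjoint (M.inn X) (M.inn Xᶜ) := by
  rw [Finset.disjoint_left]
  intro e he hc
  obtain ⟨u, hu⟩ := M.exists_end e
  exact (Finset.mem_compl.1 (M.mem_inn.1 hc u hu)) (M.mem_inn.1 he u hu)

theorem card_faces_split (X : Finset V) :
    (M.inF X).card + (M.inF Xᶜ).card + (M.crF X).card = Fintype.card F := by
  have hd1 : Disjoint (M.inF X) (M.inF Xᶜ) := by
    rw [Finset.disjoint_left]
    intro f h1 h2
    obtain ⟨e, he⟩ := M.exists_bd f
    exact Finset.disjoint_left.1 (M.inn_disj_compl X) (M.mem_inF.1 h1 e he) (M.mem_inF.1 h2 e he)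
  have hd2 : Disjoint (M.inF X ∪ M.inF Xᶜ) (M.crF X) := by
    rw [Finset.disjoint_left]
    intro f h1 h2
    obtain ⟨e, he, hec⟩ := M.mem_crF.1 h2
    rcases Finset.mem_union.1 h1 with h | h
    · exact Finset.disjoint_left.1 (M.inn_disj_cut X) (M.mem_inF.1 h e he) hec
    · exact Finset.disjoint_left.1 (M.inn_disj_cut Xᶜ) (M.mem_inF.1 h e he)
        (by rw [cut_compl]; exact hec)
  rw [← Finset.card_union_of_disjoint hd1, ← Finset.card_union_of_disjoint hd2, ← Finset.card_univ]
  congr 1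
  ext f
  simp only [Finset.mem_union, Finset.mem_univ, iff_true]
  by_cases h : f ∈ M.crF X
  · exact Or.inr h
  · exact Or.inl (M.face_trichotomy X f h)

theorem sum_cut (X : Finset V) :
    ∑ f ∈ M.crF X, (M.bd f ∩ M.cut X).card = 2 * (M.cut X).card := by
  rw [← M.sum_bd]
  apply Finset.sum_subset (Finset.subset_univ _)
  intro f _ hf
  rw [Finset.card_eq_zero]
  ext e
  simp only [Finset.mem_inter, mem_bd, Finset.notMem_empty, iff_false, not_and]
  exact fun he hec => hf (M.mem_crF.2 ⟨e, he, hec⟩)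

theorem card_crF_le (X : Finset V) : (M.crF X).card ≤ (M.cut X).card := by
  have h1 : ∑ f ∈ M.crF X, 2 ≤ ∑ f ∈ M.crF X, (M.bd f ∩ M.cut X).card := by
    apply Finset.sum_le_sum
    intro f hf
    obtain ⟨e, he, hec⟩ := M.mem_crF.1 hf
    have h2 : 0 < (M.bd f ∩ M.cut X).card :=
      Finset.card_pos.2 ⟨e, Finset.mem_inter.2 ⟨M.mem_bd.2 he, hec⟩⟩
    have := M.face_verts f X
    omega
  rw [sum_cut, Finset.sum_const, smul_eq_mul] at h1
  omega

theorem card_edges_split (X : Finset V) :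
    (M.inn X).card + (M.inn Xᶜ).card + (M.cut X).card = Fintype.card E := by
  have h1 := M.three_mul_card X
  have h2 := M.three_mul_card Xᶜ
  have h3 := Finset.card_add_card_compl X
  have h4 := M.euler.2
  rw [cut_compl] at h2
  omega

/-- Both sides of a cut of at most five edges are discs, that is, have Euler characteristic 1. The
two characteristics are at most 1, while they add up to 2 plus the number of cut edges minus the
number of crossed faces, which is at least 2. -/
theorem disc (X : Finset V) (hk : (M.cut X).card ≤ 5) (hn : X.Nonempty) (hc : Xᶜ.Nonempty) :
    (M.inF X).card + X.card = (M.inn X).card + 1 := by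
  have h1 := M.faces_le X hk hc
  have h2 := M.faces_le Xᶜ (by rwa [cut_compl]) (by rwa [compl_compl])
  have h3 := M.card_faces_split X
  have h4 := M.card_edges_split X
  have h5 := M.card_crF_le X
  have h6 := M.euler
  have h7 := Finset.card_add_card_compl X
  omega

/-- The length of the boundary walk of `X`: the number of edges inside `X` on crossed faces, counted
once for each such face. -/
noncomputable def len (X : Finset V) : ℕ := ∑ f ∈ M.crF X, (M.bd f ∩ M.inn X).card

/-- A disc with `k` outgoing edges and boundary length `ℓ` contains `6 + ℓ - 2k` pentagons. -/
theorem pents_count (X : Finset V) (hk : (M.cut X).card ≤ 5) (hn : X.Nonempty)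
    (hc : Xᶜ.Nonempty) :
    (M.pents (M.inF X)).card + 2 * (M.cut X).card = 6 + M.len X := by
  have h1 := M.disc X hk hn hc
  have h2 := M.three_mul_card X
  have h3 := M.sum_card_bd (M.inF X)
  have h4 : ∑ f ∈ M.inF X, (M.bd f).card + M.len X = 2 * (M.inn X).card := by
    rw [← M.sum_bd, len]
    have hd : Disjoint (M.inF X) (M.crF X) := by
      rw [Finset.disjoint_left]
      intro f h1 h2
      obtain ⟨e, he, hec⟩ := M.mem_crF.1 h2
      exact Finset.disjoint_left.1 (M.inn_disj_cut X) (M.mem_inF.1 h1 e he) hec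
    rw [← Finset.sum_subset (Finset.subset_univ (M.inF X ∪ M.crF X)), Finset.sum_union hd]
    · congr 1
      apply Finset.sum_congr rfl
      intro f hf
      congr 1
      refine (Finset.inter_eq_left.2 fun e he => ?_).symm
      exact M.mem_inF.1 hf e (M.mem_bd.1 he)
    · intro f _ hf
      rw [Finset.mem_union, not_or] at hf
      have hY := (M.face_trichotomy X f hf.2).resolve_left hf.1
      rw [Finset.card_eq_zero]
      ext e
      simp only [Finset.mem_inter, mem_bd, Finset.notMem_empty, iff_false, not_and]
      exact fun he hei => Finset.disjoint_left.1 (M.inn_disj_compl X) hei (M.mem_inF.1 hY e he)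
  omega

/-! ### Peeling off the rim -/

/-- When every edge leaving `X` also leaves the disjoint set `Y`, it has exactly one end in `Y`. -/
theorem cut_deg_sum (X Y : Finset V) (h : Disjoint X Y) (hsep : ∀ e ∈ M.cut X, e ∈ M.cut Y) :
    ∑ v ∈ Y, ((M.cut X).filter fun e => M.inc v e).card = (M.cut X).card := by
  rw [handshake]
  have h1 : M.cut X ∩ M.inn Y = ∅ := by
    ext e
    simp only [Finset.mem_inter, Finset.notMem_empty, iff_false, not_and]
    intro he hi
    obtain ⟨u, v, hu, hv, huX, hvX⟩ := M.mem_cut.1 he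
    exact Finset.disjoint_left.1 h huX (M.mem_inn.1 hi u hu)
  rw [h1, Finset.inter_eq_left.2 hsep]
  simp

theorem cut_deg_sum_self (X : Finset V) :
    ∑ v ∈ X, ((M.cut X).filter fun e => M.inc v e).card = (M.cut X).card := by
  have := M.cut_deg_sum Xᶜ X (disjoint_compl_left) (fun e he => by rwa [cut_compl] at he)
  rwa [cut_compl] at this

theorem inF_mono {X Y : Finset V} (h : X ⊆ Y) : M.inF X ⊆ M.inF Y := by
  intro f hf
  rw [mem_inF] at hf ⊢
  intro e he
  rw [mem_inn]
  exact fun v hv => h (M.mem_inn.1 (hf e he) v hv)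

theorem pents_mono {X Y : Finset V} (h : X ⊆ Y) :
    (M.pents (M.inF X)).card ≤ (M.pents (M.inF Y)).card :=
  Finset.card_le_card (Finset.filter_subset_filter _ (M.inF_mono h))

/-- Removing a vertex of `X` with `d` outgoing edges exchanges these for its other `3 - d` edges. -/
theorem card_cut_erase (X : Finset V) (v : V) (hvX : v ∈ X) :
    (M.cut (X.erase v)).card + 2 * ((M.cut X).filter fun e => M.inc v e).card ≤
      (M.cut X).card + 3 := by
  have hsub : M.cut (X.erase v) ⊆ ((M.cut X).filter fun e => ¬ M.inc v e) ∪
      ((Finset.univ.filter fun e => M.inc v e) \ ((M.cut X).filter fun e => M.inc v e)) := by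
    intro e he
    obtain ⟨a, b, ha, hb, haX, hbX⟩ := M.mem_cut.1 he
    rw [Finset.mem_erase] at haX hbX
    simp only [Finset.mem_union, Finset.mem_filter, Finset.mem_sdiff, Finset.mem_univ, true_and,
      not_and]
    by_cases hv : M.inc v e
    · refine Or.inr ⟨hv, fun hec _ => ?_⟩
      -- the two ends `a` and `v` of `e` both belong to `X`, so `e` cannot leave `X`
      obtain ⟨_, y, _, hy, _, hyX⟩ := M.mem_cut.1 hec
      rcases M.ends_eq ha hv haX.1 hy with rfl | rfl
      · exact hyX haX.2
      · exact hyX hvX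
    · refine Or.inl ⟨M.mem_cut.2 ⟨a, b, ha, hb, haX.2, fun hbX' => hbX ⟨?_, hbX'⟩⟩, hv⟩
      rintro rfl; exact hv hb
  have h1 := (Finset.card_le_card hsub).trans (Finset.card_union_le _ _)
  have h2 := Finset.card_filter_add_card_filter_not (s := M.cut X) (fun e => M.inc v e)
  have h3 : ((M.cut X).filter fun e => M.inc v e) ⊆ Finset.univ.filter fun e => M.inc v e :=
    Finset.filter_subset_filter _ (Finset.subset_univ _)
  rw [Finset.card_sdiff_of_subset h3, M.card_edges] at h1
  have h4 := Finset.card_le_card h3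
  rw [M.card_edges] at h4
  omega

/-- The rim of `X`: its vertices on faces crossed by the cut around `X`. -/
noncomputable def rim (X : Finset V) : Finset V := X.filter fun v => ∃ f ∈ M.crF X, M.At f v

theorem mem_rim {X : Finset V} {v : V} :
    v ∈ M.rim X ↔ v ∈ X ∧ ∃ f ∈ M.crF X, M.At f v := by simp [rim]

theorem rim_of_cut {X : Finset V} {v : V} {e : E} (hv : v ∈ X) (he : e ∈ M.cut X)
    (hi : M.inc v e) : v ∈ M.rim X := by
  have : 0 < (Finset.univ.filter fun f => M.on e f).card := by
    have := M.card_faces e; omega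
  obtain ⟨f, hf⟩ := Finset.card_pos.1 this
  have hf : M.on e f := by simpa using hf
  exact M.mem_rim.2 ⟨hv, f, M.mem_crF.2 ⟨e, hf, he⟩, e, hf, hi⟩

theorem sum_At (X : Finset V) :
    ∑ v ∈ X, ((M.crF X).filter fun f => M.At f v).card = M.len X + (M.cut X).card := by
  rw [double_count]
  have h1 : ∑ f ∈ M.crF X, 2 * (X.filter fun v => M.At f v).card =
      ∑ f ∈ M.crF X, (2 * (M.bd f ∩ M.inn X).card + (M.bd f ∩ M.cut X).card) :=
    Finset.sum_congr rfl fun f _ => M.face_verts f X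
  rw [Finset.sum_add_distrib, ← Finset.mul_sum, ← Finset.mul_sum, sum_cut] at h1
  rw [len]
  omega

theorem card_rim_ge (X : Finset V)
    (hd : ∀ v ∈ X, ((M.cut X).filter fun e => M.inc v e).card ≤ 1) :
    (M.cut X).card ≤ (M.rim X).card := by
  rw [← cut_deg_sum_self, rim, Finset.card_filter]
  apply Finset.sum_le_sum
  intro v hv
  by_cases h0 : ((M.cut X).filter fun e => M.inc v e).card = 0
  · omega
  · obtain ⟨e, he⟩ := Finset.card_pos.1 (Nat.pos_of_ne_zero h0)
    rw [Finset.mem_filter] at he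
    rw [if_pos (M.mem_rim.1 (M.rim_of_cut hv he.1 he.2)).2]
    exact hd v hv

/-- The crossed faces meet the vertices of `X` in `len X + k` incidences; every rim vertex has at
least one of them, and each of the `k` rim vertices on a cut edge has a second one. -/
theorem card_rim_le (X : Finset V)
    (hd : ∀ v ∈ X, ((M.cut X).filter fun e => M.inc v e).card ≤ 1) :
    (M.rim X).card ≤ M.len X := by
  have h : ∑ v ∈ X, (((M.cut X).filter fun e => M.inc v e).card +
      if ∃ f ∈ M.crF X, M.At f v then 1 else 0) ≤
      ∑ v ∈ X, ((M.crF X).filter fun f => M.At f v).card := by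
    apply Finset.sum_le_sum
    intro v hv
    by_cases h0 : ((M.cut X).filter fun e => M.inc v e).card = 0
    · rw [h0, zero_add]
      split_ifs with hx
      · obtain ⟨f, hf, hfv⟩ := hx
        exact Finset.card_pos.2 ⟨f, Finset.mem_filter.2 ⟨hf, hfv⟩⟩
      · exact Nat.zero_le _
    · obtain ⟨e, he⟩ := Finset.card_pos.1 (Nat.pos_of_ne_zero h0)
      rw [Finset.mem_filter] at he
      have h1 := hd v hv
      have h2 : 2 ≤ ((M.crF X).filter fun f => M.At f v).card := by
        rw [← M.card_faces e]
        apply Finset.card_le_card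
        intro f hf
        have hf : M.on e f := by simpa using hf
        exact Finset.mem_filter.2 ⟨M.mem_crF.2 ⟨e, hf, he.1⟩, e, hf, he.2⟩
      split_ifs <;> omega
  rw [sum_At, Finset.sum_add_distrib, cut_deg_sum_self, ← Finset.card_filter] at h
  have : (M.rim X).card = (X.filter fun v => ∃ f ∈ M.crF X, M.At f v).card := rfl
  omega

/-- After removal of the rim, the new outgoing edges are sent by rim vertices that carried no old
one, at most one each: a new cut edge lies on two uncrossed faces, so the third face at its rim end
is the only crossed one there. -/
theorem card_cut_peel (X : Finset V)
    (hd : ∀ v ∈ X, ((M.cut X).filter fun e => M.inc v e).card ≤ 1) :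
    (M.cut (X \ M.rim X)).card + (M.cut X).card ≤ (M.rim X).card := by
  have hR : M.rim X ⊆ X := Finset.filter_subset _ _
  have h1 : ∀ e ∈ M.cut (X \ M.rim X), e ∈ M.cut (M.rim X) := by
    intro e he
    obtain ⟨a, b, ha, hb, haX, hbX⟩ := M.mem_cut.1 he
    rw [Finset.mem_sdiff] at haX hbX
    refine M.mem_cut.2 ⟨b, a, hb, ha, ?_, haX.2⟩
    by_contra hbR
    refine haX.2 (M.rim_of_cut haX.1 (M.mem_cut.2 ⟨a, b, ha, hb, haX.1, fun h => hbX ⟨h, hbR⟩⟩) ha)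
  have h2 := M.cut_deg_sum (X \ M.rim X) (M.rim X) Finset.sdiff_disjoint h1
  have h3 : ∑ v ∈ M.rim X, ((M.cut X).filter fun e => M.inc v e).card = (M.cut X).card := by
    rw [← cut_deg_sum_self]
    apply Finset.sum_subset hR
    intro v hv hvR
    rw [Finset.card_eq_zero]
    ext e
    simp only [Finset.mem_filter, Finset.notMem_empty, iff_false, not_and]
    exact fun he hi => hvR (M.rim_of_cut hv he hi)
  have h4 : ∑ v ∈ M.rim X, (((M.cut (X \ M.rim X)).filter fun e => M.inc v e).card +
      ((M.cut X).filter fun e => M.inc v e).card) ≤ ∑ v ∈ M.rim X, 1 := by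
    apply Finset.sum_le_sum
    intro v hv
    obtain ⟨hvX, g, hg, hgv⟩ := M.mem_rim.1 hv
    have hoff : ∀ e ∈ M.cut (X \ M.rim X), ∀ f, M.on e f → f ∉ M.crF X := by
      intro e he f hf hfc
      obtain ⟨a, b, ha, hb, haX, hbX⟩ := M.mem_cut.1 he
      rw [Finset.mem_sdiff] at haX
      exact haX.2 (M.mem_rim.2 ⟨haX.1, f, hfc, e, hf, ha⟩)
    by_cases h0 : ((M.cut (X \ M.rim X)).filter fun e => M.inc v e).card = 0
    · rw [h0, zero_add]; exact hd v hvX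
    · obtain ⟨e, he⟩ := Finset.card_pos.1 (Nat.pos_of_ne_zero h0)
      rw [Finset.mem_filter] at he
      -- the crossing face `g` uses two of the three edges at `v`, none of them in the new cut
      have hle : ((M.cut (X \ M.rim X)).filter fun e => M.inc v e).card ≤ 1 := by
        have hdis : Disjoint ((M.cut (X \ M.rim X)).filter fun e => M.inc v e)
            (Finset.univ.filter fun e => M.on e g ∧ M.inc v e) := by
          rw [Finset.disjoint_left]
          intro e' h1' h2'
          exact hoff e' (Finset.mem_filter.1 h1').1 g (Finset.mem_filter.1 h2').2.1 hg
        have hsub : ((M.cut (X \ M.rim X)).filter fun e => M.inc v e) ∪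
            (Finset.univ.filter fun e => M.on e g ∧ M.inc v e) ⊆
            Finset.univ.filter fun e => M.inc v e := by
          intro e' h'
          simp only [Finset.mem_union, Finset.mem_filter, Finset.mem_univ, true_and] at h' ⊢
          tauto
        have hc := Finset.card_le_card hsub
        rw [Finset.card_union_of_disjoint hdis, M.face_deg g v hgv, M.card_edges] at hc
        omega
      -- an old and a new cut edge at `v` would need four faces around `v`
      have hzero : ((M.cut X).filter fun e => M.inc v e).card = 0 := by
        rw [Finset.card_eq_zero]
        by_contra hne
        obtain ⟨e', he'⟩ := Finset.nonempty_iff_ne_empty.2 hne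
        rw [Finset.mem_filter] at he'
        have hdis : Disjoint (Finset.univ.filter fun f => M.on e f)
            (Finset.univ.filter fun f => M.on e' f) := by
          rw [Finset.disjoint_left]
          intro f h1' h2'
          exact hoff e he.1 f (Finset.mem_filter.1 h1').2
            (M.mem_crF.2 ⟨e', (Finset.mem_filter.1 h2').2, he'.1⟩)
        have hsub : (Finset.univ.filter fun f => M.on e f) ∪
            (Finset.univ.filter fun f => M.on e' f) ⊆
            Finset.univ.filter fun f => M.At f v := by
          intro f h'
          simp only [Finset.mem_union, Finset.mem_filter, Finset.mem_univ, true_and] at h' ⊢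
          rcases h' with h' | h'
          · exact ⟨e, h', he.2⟩
          · exact ⟨e', h', he'.2⟩
        have hc := Finset.card_le_card hsub
        rw [Finset.card_union_of_disjoint hdis, M.card_faces, M.card_faces, M.card_At] at hc
        omega
      omega
  rw [Finset.sum_add_distrib, h2, h3] at h4
  simpa using h4

/-- No side of a cut of at most four edges that holds at most half of the pentagons can satisfy
`k ≤ X.card`. For a connected piece this inequality says that it contains a cycle, since a tree
with `k` outgoing edges has `k - 2` vertices. With at most six pentagons the boundary length is at
most `2k`, so peeling off the rim does not increase the cut, and induction applies until the
remainder is empty or a tree. -/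
theorem descent (n : ℕ) : ∀ X : Finset V, X.card = n → X.Nonempty → Xᶜ.Nonempty →
    (M.cut X).card ≤ 4 → (M.cut X).card ≤ X.card → (M.pents (M.inF X)).card ≤ 6 → False := by
  induction n using Nat.strong_induction_on with
  | _ n ih =>
  intro X hn hX hXc hk hkX hp
  have hk3 : 3 ≤ (M.cut X).card := M.edge_conn X hX hXc
  have hcompl : ∀ Z ⊆ X, Zᶜ.Nonempty := fun Z hZ => hXc.mono (Finset.compl_subset_compl.2 hZ)
  have hpent := M.pents_count X (by omega) hX hXc
  have hd : ∀ v ∈ X, ((M.cut X).filter fun e => M.inc v e).card ≤ 1 := by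
    intro v hv
    by_contra hcon
    have h1 := M.card_cut_erase X v hv
    have h2 := Finset.card_erase_add_one hv
    have h3 := M.pents_mono (X.erase_subset v)
    refine ih (X.erase v).card (by omega) (X.erase v) rfl (Finset.card_pos.1 (by omega))
      (hcompl _ (X.erase_subset v)) (by omega) (by omega) (by omega)
  have h1 := M.card_rim_ge X hd
  have h2 := M.card_rim_le X hd
  have h3 := M.card_cut_peel X hd
  have hR : M.rim X ⊆ X := Finset.filter_subset _ _
  have hsub : X \ M.rim X ⊆ X := Finset.sdiff_subset
  have h4 := Finset.card_sdiff_add_card_eq_card hR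
  have h5 := M.pents_mono hsub
  have h6 := M.three_mul_card X
  have h7 := M.three_mul_card (X \ M.rim X)
  have h8 := M.disc X (by omega) hX hXc
  have h9 : (M.pents (M.inF X)).card ≤ (M.inF X).card := Finset.card_filter_le _ _
  by_cases hne : (X \ M.rim X).Nonempty
  · by_cases hcyc : (M.cut (X \ M.rim X)).card ≤ (X \ M.rim X).card
    · exact ih _ (by omega) _ rfl hne (hcompl _ hsub) (by omega) hcyc (by omega)
    -- by parity the remainder has at most `c - 2` vertices, for `c` its number of outgoing edges;
    -- then the equations leave fewer faces than pentagons
    · omega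
  · rw [Finset.not_nonempty_iff_eq_empty] at hne
    rw [hne] at h4 h7
    simp only [Finset.card_empty] at h4 h7
    omega

/-- One of the two sides holds at most six of the twelve pentagons, so `descent` applies to it. -/
theorem no_small_cut (X : Finset V) (hX : X.Nonempty) (hXc : Xᶜ.Nonempty)
    (hk : (M.cut X).card ≤ 4) (h1 : (M.cut X).card ≤ X.card) (h2 : (M.cut X).card ≤ Xᶜ.card) :
    False := by
  have hd : Disjoint (M.pents (M.inF X)) (M.pents (M.inF Xᶜ)) := by
    rw [Finset.disjoint_left]
    intro f hf hf'
    obtain ⟨e, he⟩ := M.exists_bd f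
    exact Finset.disjoint_left.1 (M.inn_disj_compl X)
      (M.mem_inF.1 (Finset.mem_filter.1 hf).1 e he) (M.mem_inF.1 (Finset.mem_filter.1 hf').1 e he)
  have h3 : M.pents (M.inF X) ∪ M.pents (M.inF Xᶜ) ⊆ M.pents Finset.univ := by
    intro f hf
    simp only [pents, Finset.mem_union, Finset.mem_filter, Finset.mem_univ, true_and] at hf ⊢
    tauto
  have h4 := Finset.card_le_card h3
  rw [Finset.card_union_of_disjoint hd, card_pents] at h4
  by_cases h : (M.pents (M.inF X)).card ≤ 6
  · exact M.descent _ X rfl hX hXc hk h1 h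
  · exact M.descent _ Xᶜ rfl hXc (by rwa [compl_compl]) (by rwa [cut_compl])
      (by rwa [cut_compl]) (by omega)

/-- The vertices of a pentagon send out an odd number of edges, at most five because five of the
edges among them bound the pentagon, and not fewer than five by `no_small_cut`; moreover some face avoids the pentagon entirely. -/
theorem pentagon_cut (f : F) (hf : (M.bd f).card = 5) (X : Finset V)
    (hX : ∀ v, v ∈ X ↔ M.At f v) : (M.cut X).card = 5 ∧ f ∈ M.inF X ∧ (M.inF Xᶜ).Nonempty := by
  have hfX : f ∈ M.inF X := M.mem_inF.2 fun e he => M.mem_inn.2 fun v hv => (hX v).2 ⟨e, he, hv⟩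
  have hsub : M.bd f ⊆ M.inn X := fun e he => M.mem_inF.1 hfX e (M.mem_bd.1 he)
  have h0 : M.bd f ∩ M.cut X = ∅ :=
    Finset.disjoint_iff_inter_eq_empty.1 ((M.inn_disj_cut X).mono_left hsub)
  have h1 := M.face_verts f X
  rw [Finset.inter_eq_left.2 hsub, h0, Finset.filter_true_of_mem fun v hv => (hX v).1 hv, hf] at h1
  have h2 := M.three_mul_card X
  have h3 := Finset.card_le_card hsub
  have h4 := M.euler
  have h5 : (M.pents Finset.univ).card ≤ (Finset.univ : Finset F).card := Finset.card_filter_le _ _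
  rw [card_pents, Finset.card_univ] at h5
  have h6 := Finset.card_add_card_compl X
  simp only [Finset.card_empty] at h1
  have hXn : X.Nonempty := Finset.card_pos.1 (by omega)
  have hXc : Xᶜ.Nonempty := Finset.card_pos.1 (by omega)
  have h7 : ¬ (M.cut X).card ≤ 4 := fun h =>
    M.no_small_cut X hXn hXc h (by omega) (by omega)
  refine ⟨by omega, hfX, Finset.card_pos.1 ?_⟩
  have h8 := M.disc X (by omega) hXn hXc
  have h9 := M.card_faces_split X
  have h10 := M.card_crF_le X
  omega

end FullereneMap

/-! ### From fullerene graphs to fullerene maps -/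

/-- A property preserved along the edges of a walk in both directions (edges being unordered) is
constant on the walk. -/
theorem walk_invariant {V : Type} {H : SimpleGraph V} (P : V → Prop) {a b : V} (p : H.Walk a b)
    (h : ∀ u v, s(u, v) ∈ p.edges → P u → P v) : ∀ x ∈ p.support, (P a ↔ P x) := by
  induction p with
  | nil => intro x hx; simp at hx; rw [hx]
  | @cons a c b hac p ih =>
    have h1 : P a ↔ P c := ⟨h a c (by simp), h c a (by simp [Sym2.eq_swap])⟩
    intro x hx
    rw [SimpleGraph.Walk.support_cons, List.mem_cons] at hx
    rcases hx with rfl | hx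
    · rfl
    · exact h1.trans (ih (fun u v huv => h u v (by simp [huv])) x hx)

theorem three_le_support {V : Type} {H : SimpleGraph V} {a : V} {p : H.Walk a a}
    (hp : p.IsCycle) : 3 ≤ p.support.toFinset.card := by
  have h1 : p.support.tail.toFinset ⊆ p.support.toFinset := by
    intro x hx
    rw [List.mem_toFinset] at hx ⊢
    exact List.mem_of_mem_tail hx
  have h2 := Finset.card_le_card h1
  rw [List.toFinset_card_of_nodup hp.support_nodup, List.length_tail,
    SimpleGraph.Walk.length_support] at h2
  have := hp.three_le_length
  omega

namespace Fullerene

variable {V : Type} [Fintype V] (Fu : Fullerene V)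

noncomputable instance : Fintype Fu.faces.Face := @Fintype.ofFinite _ Fu.faces.faceFinite

/-- The edges of the graph, as a type. -/
abbrev Edge : Type := {e : Sym2 V // e ∈ Fu.G.edgeSet}

theorem edge_ends (e : Fu.Edge) :
    (Finset.univ.filter fun v => v ∈ e.1).card = 2 := by
  obtain ⟨e, he⟩ := e
  induction e using Sym2.ind with
  | _ a b =>
    have hab : a ≠ b := (show Fu.G.Adj a b from he).ne
    rw [← Finset.card_pair hab]
    congr 1
    ext v; simp

theorem vertex_edges (v : V) : (Finset.univ.filter fun e : Fu.Edge => v ∈ e.1).card = 3 := by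
  rw [← Fintype.card_subtype, ← Nat.card_eq_fintype_card, ← Fu.cubic v]
  exact Nat.card_congr ((Equiv.subtypeSubtypeEquivSubtypeInter _ (fun e => v ∈ e)).trans
    (Fu.G.incidenceSetEquivNeighborSet v))

theorem ncard_val (S : Finset Fu.Edge) :
    (Subtype.val '' (S : Set Fu.Edge)).ncard = S.card := by
  rw [Set.ncard_image_of_injective _ Subtype.val_injective, Set.ncard_coe_finset]

theorem face_degree (f : Fu.faces.Face) (v : V)
    (h : ∃ e : Fu.Edge, e.1 ∈ Fu.faces.boundary f ∧ v ∈ e.1) :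
    (Finset.univ.filter fun e : Fu.Edge => e.1 ∈ Fu.faces.boundary f ∧ v ∈ e.1).card = 2 := by
  obtain ⟨a, w, hw, hb⟩ := Fu.faces.boundary_cycle f
  have hv : v ∈ w.support := by
    obtain ⟨e, he, hve⟩ := h
    exact SimpleGraph.Walk.mem_support_of_mem_edges ((hb _).1 he) hve
  rw [← hw.ncard_neighborSet_toSubgraph_eq_two hv, ← ncard_val,
    ← Set.ncard_image_of_injective (f := fun x => s(v, x)) _
      (fun x y hxy => Sym2.congr_right.1 hxy)]
  congr 1
  ext e
  simp only [Finset.coe_filter, Finset.mem_univ, true_and, Set.mem_image, Set.mem_ofPred_eq,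
    SimpleGraph.Subgraph.mem_neighborSet, SimpleGraph.Walk.adj_toSubgraph_iff_mem_edges]
  constructor
  · rintro ⟨e, ⟨he, hve⟩, rfl⟩
    obtain ⟨x, hx⟩ := Sym2.mem_iff_exists.1 hve
    exact ⟨x, by rw [← hx]; exact (hb _).1 he, hx.symm⟩
  · rintro ⟨x, hx, rfl⟩
    exact ⟨⟨s(v, x), w.edges_subset_edgeSet hx⟩, ⟨(hb _).2 hx, by simp⟩, rfl⟩

theorem face_connected (f : Fu.faces.Face) (X : Finset V)
    (h : ∀ e : Fu.Edge, e.1 ∈ Fu.faces.boundary f → ∀ u v, u ∈ e.1 → v ∈ e.1 → u ∈ X → v ∈ X)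
    (e e' : Fu.Edge) (u v : V) (he : e.1 ∈ Fu.faces.boundary f)
    (he' : e'.1 ∈ Fu.faces.boundary f) (hu : u ∈ e.1) (hv : v ∈ e'.1) (huX : u ∈ X) : v ∈ X := by
  obtain ⟨a, w, hw, hb⟩ := Fu.faces.boundary_cycle f
  have hinv := walk_invariant (· ∈ X) w (fun x y hxy hx =>
    h ⟨s(x, y), w.edges_subset_edgeSet hxy⟩ ((hb _).2 hxy) x y (by simp) (by simp) hx)
  have h1 := hinv u (SimpleGraph.Walk.mem_support_of_mem_edges ((hb _).1 he) hu)
  have h2 := hinv v (SimpleGraph.Walk.mem_support_of_mem_edges ((hb _).1 he') hv)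
  exact h2.1 (h1.2 huX)

/-- If a cut around `X` had at most two edges, deleting their at most two ends in `X` would leave
`X` separated from its complement, unless `X` consists of these ends only. -/
theorem three_edge_connected (X : Finset V) (hX : X.Nonempty) (hXc : Xᶜ.Nonempty) :
    3 ≤ (Finset.univ.filter fun e : Fu.Edge =>
      ∃ u v, u ∈ e.1 ∧ v ∈ e.1 ∧ u ∈ X ∧ v ∉ X).card := by
  set C : Finset Fu.Edge := Finset.univ.filter fun e =>
      ∃ u v, u ∈ e.1 ∧ v ∈ e.1 ∧ u ∈ X ∧ v ∉ X with hC
  by_contra hlt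
  have hmem : ∀ e : Fu.Edge, e ∈ C ↔ ∃ u v, u ∈ e.1 ∧ v ∈ e.1 ∧ u ∈ X ∧ v ∉ X := by
    intro e; simp [hC]
  have hends : ∀ e : Fu.Edge, ∀ u v, u ∈ e.1 → v ∈ e.1 → u ≠ v → e.1 = s(u, v) :=
    fun e u v hu hv huv => (Sym2.mem_and_mem_iff huv).1 ⟨hu, hv⟩
  set S : Finset V := X.filter fun x => ∃ e ∈ C, x ∈ e.1 with hS
  have hScard : S.card ≤ C.card := by
    have : Nonempty V := hX.to_type
    choose! g hg using fun e he => (hmem e).1 he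
    choose! g' hg' using hg
    refine (Finset.card_le_card (t := C.image g) ?_).trans Finset.card_image_le
    intro x hx
    obtain ⟨hxX, e, he, hxe⟩ := Finset.mem_filter.1 hx
    refine Finset.mem_image.2 ⟨e, he, ?_⟩
    obtain ⟨h1, h2, h3, h4⟩ := hg' e he
    rw [hends e _ _ h1 h2 (fun h => h4 (h ▸ h3)), Sym2.mem_iff] at hxe
    rcases hxe with h | h
    · exact h.symm
    · exact absurd (h ▸ hxX) h4
  by_cases hXS : X ⊆ S
  · -- a set of at most two vertices sends out at least three edges
    have hX2 : X.card ≤ 2 := by have := Finset.card_le_card hXS; omega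
    have hnc : ∀ x ∈ X, ∀ e : Fu.Edge, e ∉ C → x ∈ e.1 → ∃ y ∈ X, y ≠ x ∧ e.1 = s(x, y) := by
      intro x hx e he hxe
      obtain ⟨y, hy⟩ := Sym2.mem_iff_exists.1 hxe
      refine ⟨y, ?_, ?_, hy⟩
      · by_contra hyX
        exact he ((hmem e).2 ⟨x, y, hxe, by rw [hy]; simp, hx, hyX⟩)
      · have : Fu.G.Adj x y := by have := e.2; rwa [hy] at this
        exact this.ne'
    have hsplit : ∀ x, (C.filter fun e => x ∈ e.1).card +
        (Finset.univ.filter fun e : Fu.Edge => e ∉ C ∧ x ∈ e.1).card = 3 := by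
      intro x
      rw [← Fu.vertex_edges x, ← Finset.card_union_of_disjoint]
      · congr 1
        ext e
        simp only [Finset.mem_union, Finset.mem_filter, Finset.mem_univ, true_and]
        tauto
      · rw [Finset.disjoint_left]
        intro e h1 h2
        exact (Finset.mem_filter.1 h2).2.1 (Finset.mem_filter.1 h1).1
    have hall : ∀ x ∈ X, ∀ e ∈ C, x ∈ e.1 := by
      intro x hx
      have h1 : (Finset.univ.filter fun e : Fu.Edge => e ∉ C ∧ x ∈ e.1).card ≤ 1 := by
        rw [Finset.card_le_one]
        intro e he e' he'
        simp only [Finset.mem_filter, Finset.mem_univ, true_and] at he he'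
        obtain ⟨y, hy, hyx, h1⟩ := hnc x hx e he.1 he.2
        obtain ⟨z, hz, hzx, h2⟩ := hnc x hx e' he'.1 he'.2
        have hyz : y = z := by
          by_contra hyz
          have h3 : ({x, y, z} : Finset V).card = 3 :=
            Finset.card_eq_three.2 ⟨x, y, z, hyx.symm, hzx.symm, hyz, rfl⟩
          have h4 : ({x, y, z} : Finset V) ⊆ X := by
            intro t ht
            simp only [Finset.mem_insert, Finset.mem_singleton] at ht
            rcases ht with rfl | rfl | rfl <;> assumption
          have := Finset.card_le_card h4
          omega
        apply Subtype.ext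
        rw [h1, h2, hyz]
      have h2 := hsplit x
      have h3 : (C.filter fun e => x ∈ e.1) = C :=
        Finset.eq_of_subset_of_card_le (Finset.filter_subset _ _) (by omega)
      exact fun e he => (Finset.mem_filter.1 (h3.symm ▸ he : e ∈ C.filter fun e => x ∈ e.1)).2
    obtain ⟨x, hx⟩ := hX
    have h0 : (Finset.univ.filter fun e : Fu.Edge => e ∉ C ∧ x ∈ e.1) = ∅ := by
      rw [Finset.eq_empty_iff_forall_notMem]
      intro e he
      simp only [Finset.mem_filter, Finset.mem_univ, true_and] at he
      obtain ⟨y, hy, hyx, -⟩ := hnc x hx e he.1 he.2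
      obtain ⟨-, c, hc, -⟩ := Finset.mem_filter.1 (hXS hx)
      obtain ⟨a, b, ha, hb, haX, hbX⟩ := (hmem c).1 hc
      have hc' := hends c x y (hall x hx c hc) (hall y hy c hc) hyx.symm
      rw [hc', Sym2.mem_iff] at hb
      rcases hb with rfl | rfl <;> contradiction
    have h1 := hsplit x
    rw [h0, Finset.card_empty] at h1
    have := Finset.card_filter_le C fun e => x ∈ e.1
    omega
  · obtain ⟨x, hx, hxS⟩ := Finset.not_subset.1 hXS
    obtain ⟨y, hy⟩ := hXc
    rw [Finset.mem_compl] at hy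
    have hconn := Fu.threeConnected (S : Set V) (by rw [Set.ncard_coe_finset]; omega)
    have hyS : y ∉ S := fun h => hy (Finset.mem_filter.1 h).1
    obtain ⟨p⟩ := hconn.preconnected ⟨x, by simpa using hxS⟩ ⟨y, by simpa using hyS⟩
    have hinv := walk_invariant
      (fun z : ((⊤ : Fu.G.Subgraph).deleteVerts (S : Set V)).verts => (z : V) ∈ X) p (fun a b hab ha => by
      by_contra hb
      have hadj := p.adj_of_mem_edges hab
      rw [SimpleGraph.Subgraph.coe_adj, SimpleGraph.Subgraph.deleteVerts_adj] at hadj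
      obtain ⟨-, haS, -, -, hadj⟩ := hadj
      refine haS (Finset.mem_coe.2 (Finset.mem_filter.2 ⟨ha, ⟨s(a, b), by simpa using hadj⟩,
        (hmem _).2 ⟨a, b, by simp, by simp, ha, hb⟩, by simp⟩))) _ p.end_mem_support
    exact hy (hinv.1 hx)

theorem boundary_card (f : Fu.faces.Face) :
    (Finset.univ.filter fun e : Fu.Edge => e.1 ∈ Fu.faces.boundary f).card =
      (Fu.faces.boundary f).ncard := by
  rw [← ncard_val]
  congr 1
  ext e
  simp only [Finset.coe_filter, Finset.mem_univ, true_and, Set.mem_image, Set.mem_ofPred_eq]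
  exact ⟨fun ⟨e', h, he⟩ => he ▸ h, fun h => ⟨⟨e, Fu.faces.boundary_sub f h⟩, h, rfl⟩⟩

/-- The incidence structure of a fullerene graph with its faces. -/
noncomputable def toMap : FullereneMap V Fu.Edge Fu.faces.Face where
  inc v e := v ∈ e.1
  on e f := e.1 ∈ Fu.faces.boundary f
  card_ends e := by convert Fu.edge_ends e
  card_edges v := by convert Fu.vertex_edges v
  card_faces e := by
    rw [← Fu.faces.edge_faces e.1 e.2, ← Set.ncard_coe_finset]
    congr 1; ext f; simp
  face_deg f v h := by convert Fu.face_degree f v h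
  face_conn := Fu.face_connected
  edge_conn X hX hXc := by convert Fu.three_edge_connected X hX hXc
  face_size f := by convert Fu.face_size f using 2 <;> convert Fu.boundary_card f
  pent := by
    rw [← Fu.pentagons, ← Set.ncard_coe_finset]
    congr 1
    ext f
    simp only [Finset.coe_filter, Finset.mem_univ, true_and, Set.mem_ofPred_eq]
    rw [← Fu.boundary_card f]

theorem edgeCut_eq (X : Finset V) :
    edgeCut Fu.G (X : Set V) = Subtype.val '' (Fu.toMap.cut X : Set Fu.Edge) := by
  ext e
  simp only [edgeCut, Set.mem_ofPred_eq, Set.mem_image, Finset.mem_coe, FullereneMap.mem_cut]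
  constructor
  · rintro ⟨a, b, hab, rfl, ha, hb⟩
    exact ⟨⟨s(a, b), hab⟩, ⟨a, b, Sym2.mem_mk_left a b, Sym2.mem_mk_right a b, ha, hb⟩, rfl⟩
  · rintro ⟨e, ⟨a, b, ha, hb, haX, hbX⟩, rfl⟩
    have hne : a ≠ b := fun h => hbX (h ▸ haX)
    have h := (Sym2.mem_and_mem_iff hne).1 ⟨ha, hb⟩
    exact ⟨a, b, by have := e.2; rwa [h] at this, h, haX, hbX⟩

theorem ncard_edgeCut (X : Finset V) :
    (edgeCut Fu.G (X : Set V)).ncard = (Fu.toMap.cut X).card := by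
  rw [edgeCut_eq, ncard_val]

/-- The component of one of the two cycles and its complement both have at least three vertices;
since `X.card` and the cut size have the same parity, each then has at least as many vertices as
the cut has edges when that number is at most four. -/
theorem cyclically_five : CyclicallyEdgeConnected Fu.G 5 := by
  rintro C ⟨hC, u, v, p, q, hp, hq, hr⟩
  by_contra hlt
  set X : Finset V := Finset.univ.filter fun w => (Fu.G.deleteEdges C).Reachable u w with hXdef
  have hmem : ∀ w, w ∈ X ↔ (Fu.G.deleteEdges C).Reachable u w := by simp [hXdef]
  have hcut : (Fu.toMap.cut X).card ≤ C.ncard := by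
    rw [← ncard_edgeCut]
    refine Set.ncard_le_ncard ?_ (Set.toFinite C)
    rintro e ⟨a, b, hab, rfl, ha, hb⟩
    by_contra hn
    refine hb ((hmem b).2 (((hmem a).1 ha).trans (SimpleGraph.Adj.reachable ?_)))
    exact SimpleGraph.deleteEdges_adj.2 ⟨hab, hn⟩
  have hX : 3 ≤ X.card := (three_le_support hp).trans (Finset.card_le_card fun w hw =>
    (hmem w).2 ⟨p.takeUntil w (List.mem_toFinset.1 hw)⟩)
  have hXc : 3 ≤ Xᶜ.card := (three_le_support hq).trans (Finset.card_le_card fun w hw => by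
    rw [Finset.mem_compl, hmem]
    exact fun h => hr (h.trans ⟨(q.takeUntil w (List.mem_toFinset.1 hw)).reverse⟩))
  have h1 := Fu.toMap.three_mul_card X
  have h2 := Fu.toMap.three_mul_card Xᶜ
  rw [FullereneMap.cut_compl] at h2
  exact Fu.toMap.no_small_cut X (Finset.card_pos.1 (by omega)) (Finset.card_pos.1 (by omega))
    (by omega) (by omega) (by omega)

/-- A face contained in one side `Y` of the cut around `X` survives, as a cycle, the deletion of the
cut. -/
theorem face_cycle (X Y : Finset V) (hXY : Fu.toMap.cut Y = Fu.toMap.cut X)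
    (f : Fu.faces.Face) (hf : f ∈ Fu.toMap.inF Y) :
    ∃ (u : V) (p : (Fu.G.deleteEdges (edgeCut Fu.G (X : Set V))).Walk u u),
      u ∈ Y ∧ p.IsCycle := by
  obtain ⟨a, w, hw, hb⟩ := Fu.faces.boundary_cycle f
  have hin : ∀ e (he : e ∈ w.edges), (⟨e, w.edges_subset_edgeSet he⟩ : Fu.Edge) ∈ Fu.toMap.inn Y :=
    fun e he => Fu.toMap.mem_inF.1 hf ⟨e, w.edges_subset_edgeSet he⟩ ((hb e).2 he)
  have havoid : ∀ e ∈ w.edges, e ∉ edgeCut Fu.G (X : Set V) := by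
    intro e he hec
    rw [edgeCut_eq] at hec
    obtain ⟨e', he', rfl⟩ := hec
    rw [← hXY] at he'
    exact Finset.disjoint_left.1 (Fu.toMap.inn_disj_cut Y) (hin _ he) he'
  refine ⟨a, w.toDeleteEdges _ havoid, ?_, hw.transfer _⟩
  have hadj := w.adj_snd hw.not_nil
  have hsnd : s(a, w.snd) ∈ w.edges := by
    rw [← SimpleGraph.Walk.adj_toSubgraph_iff_mem_edges]
    exact w.toSubgraph_adj_snd hw.not_nil
  exact Fu.toMap.mem_inn.1 (hin _ hsnd) a (Sym2.mem_mk_left a _)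

end Fullerene

end

/-- Every fullerene graph is cyclically 5-edge-connected, and 5 is exact: the edges
pointing outward from any pentagonal face form a cyclic 5-edge-cut. -/
theorem fullerene_cyclic_edge_connectivity {V : Type} [Fintype V] (Fu : Fullerene V) :
    CyclicallyEdgeConnected Fu.G 5 ∧
    ∀ f : Fu.faces.Face, (Fu.faces.boundary f).ncard = 5 →
      IsCyclicEdgeCut Fu.G (edgeCut Fu.G (Fu.faceVerts f)) ∧
      (edgeCut Fu.G (Fu.faceVerts f)).ncard = 5 := by
  classical
  refine ⟨Fu.cyclically_five, fun f hf => ?_⟩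
  set X : Finset V := (Set.toFinite (Fu.faceVerts f)).toFinset with hX
  have hXc : (X : Set V) = Fu.faceVerts f := by simp [hX]
  rw [← hXc]
  have hAt : ∀ v, v ∈ X ↔ Fu.toMap.At f v := by
    intro v
    rw [← Finset.mem_coe, hXc]
    exact ⟨fun ⟨e, he, hv⟩ => ⟨⟨e, Fu.faces.boundary_sub f he⟩, he, hv⟩,
      fun ⟨e, he, hv⟩ => ⟨e.1, he, hv⟩⟩
  obtain ⟨h5, hfX, g, hg⟩ := Fu.toMap.pentagon_cut f (by
    rw [← hf, ← Fu.boundary_card]; rfl) X hAt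
  refine ⟨⟨?_, ?_⟩, by rw [Fu.ncard_edgeCut, h5]⟩
  · rintro e ⟨a, b, hab, rfl, -⟩
    exact hab
  · obtain ⟨u, p, hu, hp⟩ := Fu.face_cycle X X rfl f hfX
    obtain ⟨v, q, hv, hq⟩ := Fu.face_cycle X _ (Fu.toMap.cut_compl X) g hg
    refine ⟨u, v, p, q, hp, hq, fun ⟨r⟩ => ?_⟩
    have hinv := walk_invariant (· ∈ X) r (fun a b hab ha => by
      by_contra hb
      have hadj := SimpleGraph.deleteEdges_adj.1 (r.adj_of_mem_edges hab)
      exact hadj.2 ⟨a, b, hadj.1, rfl, ha, hb⟩) v r.end_mem_support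
    exact (Finset.mem_compl.1 hv) (hinv.1 hu)
end
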